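/- For every k ≥ 2, the following families all coincide with the family L_fin(P, CF[−λ]) of programmed languages of finite index: L_fin(CD_∞, CF[−λ], t), L_fin(CD_∞, CF[−λ], =k), L_fin(CD_∞, CF[−λ], ≥k), and, for every k' ∈ ℕ and Δ ∈ {≤, =, ≥}, L_fin(CD_∞, CF[−λ], (t∧Δk')); this holds both with and without erasing rules. -/

import Mathlib

namespace CDHybrid

/-- Symbols: nonterminals are natural numbers, terminals come from `T`. -/
abbrev Symb (T : Type) := ℕ ⊕ T

/-- Sentential forms. -/
abbrev SForm (T : Type) := List (Symb T)

/-- A context-free rule `A → z`. -/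
abbrev Rule (T : Type) := ℕ × SForm T

/-- Number of nonterminal occurrences in a sentential form. -/
def ntCount {T : Type} (x : SForm T) : ℕ := (x.filter Sum.isLeft).length

/-- One rewriting step using some rule of the rule set `P`. -/
def RStep {T : Type} (P : List (Rule T)) (x y : SForm T) : Prop :=
  ∃ r ∈ P, ∃ u v : SForm T, x = u ++ Sum.inl r.1 :: v ∧ y = u ++ r.2 ++ v

/-- `m`-step derivation using only rules of `P`. -/
def StepsN {T : Type} (P : List (Rule T)) : ℕ → SForm T → SForm T → Prop
  | 0, x, y => x = y
  | m + 1, x, y => ∃ z, RStep P x z ∧ StepsN P m z y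

/-- `m`-step derivation using only rules of `P`, all intermediate (and the final)
sentential forms having at most `b` occurrences of nonterminals. -/
def StepsNB {T : Type} (P : List (Rule T)) (b : ℕ) : ℕ → SForm T → SForm T → Prop
  | 0, x, y => x = y
  | m + 1, x, y => ∃ z, RStep P x z ∧ ntCount z ≤ b ∧ StepsNB P b m z y

/-- Derivation modes of CD grammar systems. -/
inductive Mode where
  | eq : ℕ → Mode
  | le : ℕ → Mode
  | ge : ℕ → Mode
  | star : Mode
  | t : Mode
  | conj : Mode → Mode → Mode

/-- The predicate of a derivation mode: `modeOK P f m y` holds if an `m`-step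
derivation by the component `P` ending in `y` is acceptable for mode `f`. -/
def modeOK {T : Type} (P : List (Rule T)) : Mode → ℕ → SForm T → Prop
  | .eq k, m, _ => m = k
  | .le k, m, _ => m ≤ k
  | .ge k, m, _ => k ≤ m
  | .star, _, _ => True
  | .t, _, y => ¬ ∃ z, RStep P y z
  | .conj f g, m, y => modeOK P f m y ∧ modeOK P g m y

/-- A CD grammar system with context-free components. -/
structure CDGS (T : Type) where
  deg : ℕ
  start : ℕ
  comp : Fin deg → List (Rule T)

/-- λ-freeness: no erasing rules. -/
def CDGS.LamFree {T : Type} (G : CDGS T) : Prop :=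
  ∀ i : Fin G.deg, ∀ r ∈ G.comp i, r.2 ≠ []

/-- One derivation step of a component of `G` in mode `f`. -/
def CDGS.ModeStep {T : Type} (G : CDGS T) (f : Mode) (x y : SForm T) : Prop :=
  ∃ i : Fin G.deg, ∃ m : ℕ, StepsN (G.comp i) m x y ∧ modeOK (G.comp i) f m y

/-- One derivation step of a component of `G` in mode `f`, with all produced
sentential forms having at most `b` nonterminal occurrences. -/
def CDGS.ModeStepB {T : Type} (G : CDGS T) (f : Mode) (b : ℕ) (x y : SForm T) : Prop :=
  ∃ i : Fin G.deg, ∃ m : ℕ, StepsNB (G.comp i) b m x y ∧ modeOK (G.comp i) f m y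

/-- The language generated by `G` in mode `f`. -/
def CDGS.lang {T : Type} (G : CDGS T) (f : Mode) : Set (List T) :=
  { w | Relation.TransGen (G.ModeStep f) [Sum.inl G.start] (w.map Sum.inr) }

/-- The words of the language of `G` in mode `f` possessing a derivation of index
at most `b`, i.e., all sentential forms occurring in it have at most `b`
nonterminal occurrences. -/
def CDGS.langB {T : Type} (G : CDGS T) (f : Mode) (b : ℕ) : Set (List T) :=
  { w | ntCount ([Sum.inl G.start] : SForm T) ≤ b ∧
      Relation.TransGen (G.ModeStepB f b) [Sum.inl G.start] (w.map Sum.inr) }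

/-- Two languages are considered equal iff they differ at most in the empty word. -/
def EqL {T : Type} (L₁ L₂ : Set (List T)) : Prop := L₁ \ {[]} = L₂ \ {[]}

/-- The family `L(CD_n, CF[−λ], f)`; `lf = true` forbids erasing rules. -/
def CDFam (T : Type) (lf : Bool) (n : ℕ) (f : Mode) : Set (Set (List T)) :=
  { L | ∃ G : CDGS T, G.deg ≤ n ∧ (lf = true → G.LamFree) ∧ EqL (G.lang f) L }

/-- The family `L(CD_∞, CF[−λ], f)`. -/
def CDFamInf (T : Type) (lf : Bool) (f : Mode) : Set (Set (List T)) :=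
  { L | ∃ G : CDGS T, (lf = true → G.LamFree) ∧ EqL (G.lang f) L }

/-- The family `L_m(CD_n, CF[−λ], f)` of such languages of index at most `m`. -/
def CDFamInd (T : Type) (lf : Bool) (n : ℕ) (f : Mode) (m : ℕ) : Set (Set (List T)) :=
  { L | ∃ G : CDGS T, G.deg ≤ n ∧ (lf = true → G.LamFree) ∧ EqL (G.lang f) L ∧
      G.lang f ⊆ G.langB f m }

/-- The family `L_m(CD_∞, CF[−λ], f)`. -/
def CDFamIndInf (T : Type) (lf : Bool) (f : Mode) (m : ℕ) : Set (Set (List T)) :=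
  { L | ∃ G : CDGS T, (lf = true → G.LamFree) ∧ EqL (G.lang f) L ∧ G.lang f ⊆ G.langB f m }

/-- The family `L_fin(CD_∞, CF[−λ], f)`. -/
def CDFamFinInf (T : Type) (lf : Bool) (f : Mode) : Set (Set (List T)) :=
  { L | ∃ m : ℕ, 1 ≤ m ∧ L ∈ CDFamIndInf T lf f m }

/-- A context-free grammar. -/
structure CFG (T : Type) where
  start : ℕ
  rules : List (Rule T)

/-- The language generated by a context-free grammar. -/
def CFG.lang {T : Type} (G : CFG T) : Set (List T) :=
  { w | Relation.ReflTransGen (RStep G.rules) [Sum.inl G.start] (w.map Sum.inr) }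

/-- The words of `G.lang` having a derivation of index at most `m`. -/
def CFG.langB {T : Type} (G : CFG T) (m : ℕ) : Set (List T) :=
  { w | ntCount ([Sum.inl G.start] : SForm T) ≤ m ∧
      Relation.ReflTransGen (fun x y => RStep G.rules x y ∧ ntCount y ≤ m)
        [Sum.inl G.start] (w.map Sum.inr) }

/-- The family `L(CF)` of context-free languages. -/
def CFFam (T : Type) : Set (Set (List T)) := { L | ∃ G : CFG T, EqL G.lang L }

/-- The family `L_m(CF)` of context-free languages of index at most `m`. -/
def CFFamInd (T : Type) (m : ℕ) : Set (Set (List T)) :=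
  { L | ∃ G : CFG T, EqL G.lang L ∧ G.lang ⊆ G.langB m }

/-- The family `L_fin(CF)` of context-free languages of finite index. -/
def CFFamFin (T : Type) : Set (Set (List T)) :=
  { L | ∃ m : ℕ, 1 ≤ m ∧ L ∈ CFFamInd T m }

/-- A grammar is linear if every right-hand side contains at most one nonterminal. -/
def CFG.Linear {T : Type} (G : CFG T) : Prop := ∀ r ∈ G.rules, ntCount r.2 ≤ 1

/-- The family `L(LIN)` of linear context-free languages. -/
def LinFam (T : Type) : Set (Set (List T)) :=
  { L | ∃ G : CFG T, G.Linear ∧ EqL G.lang L }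

/-- The family `L(FIN)` of finite languages. -/
def FinFam (T : Type) : Set (Set (List T)) := { L | L.Finite }

/-- A programmed grammar with context-free rules. -/
structure PG (T : Type) where
  start : ℕ
  nLab : ℕ
  rule : Fin nLab → Rule T
  succ : Fin nLab → Set (Fin nLab)
  fail : Fin nLab → Set (Fin nLab)

def PG.LamFree {T : Type} (G : PG T) : Prop := ∀ r : Fin G.nLab, (G.rule r).2 ≠ []

/-- No appearance checking: all failure fields are empty. -/
def PG.NoAC {T : Type} (G : PG T) : Prop := ∀ r : Fin G.nLab, G.fail r = ∅

/-- One step of a programmed grammar on pairs (sentential form, label). -/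
def PG.PStep {T : Type} (G : PG T) (p q : SForm T × Fin G.nLab) : Prop :=
  (∃ u v : SForm T, p.1 = u ++ Sum.inl (G.rule p.2).1 :: v ∧
      q.1 = u ++ (G.rule p.2).2 ++ v ∧ q.2 ∈ G.succ p.2) ∨
  (Sum.inl (G.rule p.2).1 ∉ p.1 ∧ q.1 = p.1 ∧ q.2 ∈ G.fail p.2)

/-- The language generated by a programmed grammar. -/
def PG.lang {T : Type} (G : PG T) : Set (List T) :=
  { w | ∃ r₁ r₂ : Fin G.nLab,
      Relation.ReflTransGen G.PStep ([Sum.inl G.start], r₁) (w.map Sum.inr, r₂) }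

/-- The words of `G.lang` having a derivation of index at most `m`. -/
def PG.langB {T : Type} (G : PG T) (m : ℕ) : Set (List T) :=
  { w | ∃ r₁ r₂ : Fin G.nLab, ntCount ([Sum.inl G.start] : SForm T) ≤ m ∧
      Relation.ReflTransGen (fun p q => G.PStep p q ∧ ntCount q.1 ≤ m)
        ([Sum.inl G.start], r₁) (w.map Sum.inr, r₂) }

/-- The family `L_m(P, CF[−λ][, ac])`: programmed languages of index at most `m`;
`ac = false` forbids appearance checking, `lf = true` forbids erasing rules. -/
def PFamInd (T : Type) (lf ac : Bool) (m : ℕ) : Set (Set (List T)) :=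
  { L | ∃ G : PG T, (lf = true → G.LamFree) ∧ (ac = false → G.NoAC) ∧
      EqL G.lang L ∧ G.lang ⊆ G.langB m }

/-- The family `L_fin(P, CF[−λ][, ac])` of programmed languages of finite index. -/
def PFamFin (T : Type) (lf ac : Bool) : Set (Set (List T)) :=
  { L | ∃ m : ℕ, 1 ≤ m ∧ L ∈ PFamInd T lf ac m }

theorem rtg_lift {α β : Type} {r : α → α → Prop} {p : β → β → Prop} (f : α → β)
    (h : ∀ x y, r x y → p (f x) (f y)) {x y : α} (hr : Relation.ReflTransGen r x y) :
    Relation.ReflTransGen p (f x) (f y) := by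
  induction hr with
  | refl => exact .refl
  | tail _ h2 ih => exact ih.tail (h _ _ h2)

theorem tg_mono {α : Type} {r p : α → α → Prop}
    (h : ∀ x y, r x y → p x y) {x y : α} (hr : Relation.TransGen r x y) :
    Relation.TransGen p x y := by
  induction hr with
  | single h1 => exact .single (h _ _ h1)
  | tail _ h2 ih => exact ih.tail (h _ _ h2)

/-- Multiset of nonterminal occurrences. -/
def nts (x : SForm ℕ) : Multiset ℕ := ↑(x.filterMap Sum.getLeft?)

@[simp] theorem nts_nil : nts [] = 0 := rfl
@[simp] theorem nts_inl (a : ℕ) (x : SForm ℕ) : nts (Sum.inl a :: x) = a ::ₘ nts x := rfl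
@[simp] theorem nts_inr (a : ℕ) (x : SForm ℕ) : nts (Sum.inr a :: x) = nts x := rfl
@[simp] theorem nts_append (x y : SForm ℕ) : nts (x ++ y) = nts x + nts y := by
  simp [nts]
theorem ntCount_eq (x : SForm ℕ) : ntCount x = (nts x).card := by
  induction x with
  | nil => rfl
  | cons s x ih =>
    cases s with
    | inl a => rw [nts_inl, Multiset.card_cons, ← ih]; rfl
    | inr a => rw [nts_inr, ← ih]; rfl
theorem mem_nts {a : ℕ} {x : SForm ℕ} : a ∈ nts x ↔ Sum.inl a ∈ x := by
  induction x with
  | nil => simp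
  | cons s x ih => cases s <;> simp [ih]
@[simp] theorem nts_term (w : List ℕ) : nts (w.map Sum.inr) = 0 := by
  induction w with
  | nil => rfl
  | cons a w ih => simp [ih]
theorem term_of_nts {x : SForm ℕ} (h : nts x = 0) : ∃ w : List ℕ, x = w.map Sum.inr := by
  induction x with
  | nil => exact ⟨[], rfl⟩
  | cons s x ih =>
    cases s with
    | inl a => simp at h
    | inr a =>
      obtain ⟨w, rfl⟩ := ih (by simpa using h)
      exact ⟨a :: w, rfl⟩

theorem rstep_iff_nts {P : List (Rule ℕ)} {y : SForm ℕ} :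
    (∃ z, RStep P y z) ↔ ∃ r ∈ P, r.1 ∈ nts y := by
  constructor
  · rintro ⟨z, r, hr, u, v, rfl, rfl⟩
    exact ⟨r, hr, by simp⟩
  · rintro ⟨r, hr, h⟩
    obtain ⟨u, v, rfl⟩ := List.append_of_mem (mem_nts.1 h)
    exact ⟨_, r, hr, u, v, rfl, rfl⟩

theorem stepsNB_trans {P : List (Rule ℕ)} {b n n' : ℕ} {x y z : SForm ℕ}
    (h : StepsNB P b n x y) (h' : StepsNB P b n' y z) : StepsNB P b (n + n') x z := by
  induction n generalizing x with
  | zero => simp only [StepsNB] at h; subst h; simpa using h'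
  | succ n ih =>
    obtain ⟨t, h1, h2, h3⟩ := h
    rw [Nat.add_right_comm]
    exact ⟨t, h1, h2, ih h3⟩

theorem stepsNB_one {P : List (Rule ℕ)} {b : ℕ} {x y : SForm ℕ}
    (h : RStep P x y) (hb : ntCount y ≤ b) : StepsNB P b 1 x y := ⟨y, h, hb, rfl⟩

theorem stepsN_of_B {P : List (Rule ℕ)} {b n : ℕ} {x y : SForm ℕ}
    (h : StepsNB P b n x y) : StepsN P n x y := by
  induction n generalizing x with
  | zero => exact h
  | succ n ih =>
    obtain ⟨t, h1, h2, h3⟩ := h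
    exact ⟨t, h1, ih h3⟩

theorem cd_langB_sub (G : CDGS ℕ) (f : Mode) (m : ℕ) : G.langB f m ⊆ G.lang f := by
  rintro w ⟨_, h⟩
  exact tg_mono (fun x y ⟨i, n, h1, h2⟩ => ⟨i, n, stepsN_of_B h1, h2⟩) h

theorem pg_langB_sub (G : PG ℕ) (m : ℕ) : G.langB m ⊆ G.lang := by
  rintro w ⟨r₁, r₂, _, h⟩
  exact ⟨r₁, r₂, rtg_lift id (fun x y h => h.1) h⟩

theorem rstep_lt {P : List (Rule ℕ)} {B : ℕ} (hP : ∀ r ∈ P, ∀ a ∈ nts r.2, a < B)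
    {x y : SForm ℕ} (h : RStep P x y) (hx : ∀ a ∈ nts x, a < B) : ∀ a ∈ nts y, a < B := by
  obtain ⟨r, hr, u, v, rfl, rfl⟩ := h
  intro a ha
  simp only [nts_append, nts_inl, Multiset.mem_add, Multiset.mem_cons] at ha hx
  rcases ha with (ha | ha) | ha
  · exact hx _ (Or.inl ha)
  · exact hP r hr a ha
  · exact hx _ (Or.inr (Or.inr ha))

theorem stepsNB_bd {P : List (Rule ℕ)} {b n : ℕ} {x y : SForm ℕ}
    (h : StepsNB P b n x y) (hx : ntCount x ≤ b) : ntCount y ≤ b := by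
  induction n generalizing x with
  | zero => simp only [StepsNB] at h; subst h; exact hx
  | succ n ih => obtain ⟨t, h1, h2, h3⟩ := h; exact ih h3 h2

theorem stepsNB_lt {P : List (Rule ℕ)} {b n B : ℕ} {x y : SForm ℕ}
    (hP : ∀ r ∈ P, ∀ a ∈ nts r.2, a < B)
    (h : StepsNB P b n x y) (hx : ∀ a ∈ nts x, a < B) : ∀ a ∈ nts y, a < B := by
  induction n generalizing x with
  | zero => simp only [StepsNB] at h; subst h; exact hx
  | succ n ih => obtain ⟨t, h1, h2, h3⟩ := h; exact ih h3 (rstep_lt hP h1 hx)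

/-- a bound for nonterminals in a finite list of rules -/
theorem exists_bound (P : List (Rule ℕ)) (s : ℕ) : ∃ B, s < B ∧
    ∀ r ∈ P, r.1 < B ∧ ∀ a ∈ nts r.2, a < B := by
  induction P with
  | nil => exact ⟨s + 1, by simp⟩
  | cons r P ih =>
    obtain ⟨B, hs, hB⟩ := ih
    refine ⟨B + r.1 + (nts r.2).sum + 1, by omega, ?_⟩
    intro r' hr'
    rcases List.mem_cons.1 hr' with rfl | hr'
    · refine ⟨by omega, fun a ha => ?_⟩
      have := Multiset.single_le_sum (fun x _ => Nat.zero_le x) a ha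
      omega
    · refine ⟨by have := (hB r' hr').1; omega, fun a ha => ?_⟩
      have := (hB r' hr').2 a ha
      omega

/-- programmed grammars over arbitrary label types -/
def GStep {Lab : Type} (Λ : Set Lab) (rule : Lab → Rule ℕ) (sc : Lab → Lab → Prop)
    (p q : SForm ℕ × Lab) : Prop :=
  q.2 ∈ Λ ∧ sc p.2 q.2 ∧ ∃ u v : SForm ℕ, p.1 = u ++ Sum.inl (rule p.2).1 :: v ∧
    q.1 = u ++ (rule p.2).2 ++ v

theorem toPG {Lab : Type} (Λ : Set Lab) (hΛ : Λ.Finite) (rule : Lab → Rule ℕ)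
    (sc : Lab → Lab → Prop) (s : ℕ) : ∃ G : PG ℕ, G.NoAC ∧
      ((∀ l ∈ Λ, (rule l).2 ≠ []) → G.LamFree) ∧
      (∀ w ∈ G.lang, ∃ l₁ l₂, l₁ ∈ Λ ∧ Relation.ReflTransGen (GStep Λ rule sc)
        ([Sum.inl s], l₁) (w.map Sum.inr, l₂)) ∧
      (∀ m w, 1 ≤ m → (∃ l₁ l₂, l₁ ∈ Λ ∧ Relation.ReflTransGen
        (fun p q => GStep Λ rule sc p q ∧ ntCount q.1 ≤ m)
        ([Sum.inl s], l₁) (w.map Sum.inr, l₂)) → w ∈ G.langB m) := by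
  have := hΛ.to_subtype
  obtain ⟨n, ⟨e⟩⟩ := Finite.exists_equiv_fin Λ
  refine ⟨⟨s, n, fun i => rule (e.symm i).1, fun i => {j | sc (e.symm i).1 (e.symm j).1},
    fun _ => ∅⟩, fun _ => rfl, fun h i => h _ (e.symm i).2, ?_, ?_⟩
  · rintro w ⟨r₁, r₂, h⟩
    refine ⟨(e.symm r₁).1, (e.symm r₂).1, (e.symm r₁).2, ?_⟩
    refine rtg_lift (fun p : SForm ℕ × Fin n => (p.1, (e.symm p.2).1)) ?_ h
    rintro ⟨x, i⟩ ⟨y, j⟩ (⟨u, v, h1, h2, h3⟩ | ⟨_, _, h⟩)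
    · exact ⟨(e.symm j).2, h3, u, v, h1, h2⟩
    · exact absurd h (by simp)
  · rintro m w hm ⟨l₁, l₂, hl, h⟩
    have key : ∀ q, Relation.ReflTransGen
        (fun p q => GStep Λ rule sc p q ∧ ntCount q.1 ≤ m) ([Sum.inl s], l₁) q →
        ∃ hq : q.2 ∈ Λ, Relation.ReflTransGen (fun p q => (PG.mk s n (fun i => rule (e.symm i).1)
          (fun i => {j | sc (e.symm i).1 (e.symm j).1}) (fun _ => ∅)).PStep p q ∧
            ntCount q.1 ≤ m) ([Sum.inl s], e ⟨l₁, hl⟩) (q.1, e ⟨q.2, hq⟩) := by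
      intro q hq
      induction hq with
      | refl => exact ⟨hl, .refl⟩
      | @tail p q _ h2 ih =>
        obtain ⟨hp, ih⟩ := ih
        obtain ⟨⟨hq, h3, u, v, h4, h5⟩, h6⟩ := h2
        refine ⟨hq, ih.tail ⟨Or.inl ⟨u, v, ?_, ?_, ?_⟩, h6⟩⟩
        · simpa using h4
        · simpa using h5
        · simpa using h3
    obtain ⟨hq, h'⟩ := key _ h
    exact ⟨_, _, by simpa [ntCount_eq] using hm, h'⟩

/-- mode predicate on multisets of nonterminals -/
def modeM (P : List (Rule ℕ)) : Mode → ℕ → Multiset ℕ → Prop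
  | .eq k, m, _ => m = k
  | .le k, m, _ => m ≤ k
  | .ge k, m, _ => k ≤ m
  | .star, _, _ => True
  | .t, _, M => ¬ ∃ r ∈ P, r.1 ∈ M
  | .conj f g, m, M => modeM P f m M ∧ modeM P g m M

def mBound : Mode → ℕ
  | .eq k => k + 1
  | .le k => k + 1
  | .ge k => k
  | .star => 0
  | .t => 0
  | .conj f g => max (mBound f) (mBound g)

theorem modeM_iff (P : List (Rule ℕ)) (f : Mode) (K m : ℕ) (hK : mBound f ≤ K) (y : SForm ℕ) :
    modeOK P f m y ↔ modeM P f (min m K) (nts y) := by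
  induction f with
  | eq k => simp only [modeOK, modeM, mBound] at *; omega
  | le k => simp only [modeOK, modeM, mBound] at *; omega
  | ge k => simp only [modeOK, modeM, mBound] at *; omega
  | star => simp only [modeOK, modeM]
  | t => simp only [modeOK, modeM, rstep_iff_nts]
  | conj f g ihf ihg =>
    simp only [mBound] at hK
    simp only [modeOK, modeM]
    rw [ihf (le_trans (le_max_left _ _) hK), ihg (le_trans (le_max_right _ _) hK)]

inductive BLab (n : ℕ) where
  | start : BLab n
  | fin : BLab n
  | run (M : Multiset ℕ) (i : Fin n) (c : ℕ) (r : Rule ℕ) : BLab n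

section CDtoPG
variable (G : CDGS ℕ) (f : Mode) (m B : ℕ)

def bΛ : Set (BLab G.deg) := fun l => match l with
  | .start => True
  | .fin => True
  | .run M i c r => M.card ≤ m ∧ (∀ a ∈ M, a < B) ∧ c ≤ mBound f ∧ r ∈ G.comp i ∧ r.1 ∈ M

def bRule : BLab G.deg → Rule ℕ
  | .run _ _ _ r => r
  | _ => (B, [Sum.inl G.start])

def bEntry (M : Multiset ℕ) (l : BLab G.deg) : Prop :=
  l = .fin ∨ ∃ j r, l = .run M j 0 r

def bSucc : BLab G.deg → BLab G.deg → Prop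
  | .start, l => bEntry G {G.start} l
  | .fin, _ => False
  | .run M i c r, l =>
    (M.erase r.1 + nts r.2).card ≤ m ∧
    ((∃ r', l = .run (M.erase r.1 + nts r.2) i (min (c + 1) (mBound f)) r') ∨
     (modeM (G.comp i) f (min (c + 1) (mBound f)) (M.erase r.1 + nts r.2) ∧
       bEntry G (M.erase r.1 + nts r.2) l))

theorem bΛ_fin : (bΛ G f m B).Finite := by
  have h1 : (Set.Iic (m • Multiset.range B) : Set (Multiset ℕ)).Finite := Set.finite_Iic _
  have h2 : (⋃ i : Fin G.deg, {r | r ∈ G.comp i}).Finite :=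
    Set.finite_iUnion (fun i => List.finite_toSet _)
  have h3 := (h1.prod ((Set.finite_univ (α := Fin G.deg)).prod
    ((Set.finite_Iic (mBound f)).prod h2))).image
      (fun p => BLab.run p.1 p.2.1 p.2.2.1 p.2.2.2)
  refine ((h3.insert .fin).insert .start).subset ?_
  intro l hl
  cases l with
  | start => simp
  | fin => simp
  | run M i c r =>
    obtain ⟨h1, h2, h3, h4, h5⟩ := hl
    refine Or.inr (Or.inr ⟨(M, i, c, r), ⟨?_, trivial, h3, Set.mem_iUnion.2 ⟨i, h4⟩⟩, rfl⟩)
    rw [Set.mem_Iic, Multiset.le_iff_count]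
    intro a
    by_cases ha : a ∈ M
    · rw [Multiset.count_nsmul, Multiset.count_eq_one_of_mem (Multiset.nodup_range B)
        (Multiset.mem_range.2 (h2 a ha)), mul_one]
      exact (Multiset.count_le_card _ _).trans h1
    · rw [Multiset.count_eq_zero_of_notMem ha]; exact Nat.zero_le _

variable {G f m B}

theorem nts_rep_erase (u v z : SForm ℕ) (A : ℕ) :
    nts (u ++ z ++ v) = (nts (u ++ Sum.inl A :: v)).erase A + nts z := by
  have : nts (u ++ Sum.inl A :: v) = A ::ₘ (nts u + nts v) := by
    simp
  rw [this, Multiset.erase_cons_head]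
  simp only [nts_append]
  abel

/-- invariant for soundness -/
def bInv (G : CDGS ℕ) (f : Mode) (m B : ℕ) (x : SForm ℕ) : BLab G.deg → Prop
  | .start => x = [Sum.inl B]
  | .fin => Relation.ReflTransGen (G.ModeStepB f m) [Sum.inl G.start] x
  | .run M i c r => M = nts x ∧ r ∈ G.comp i ∧ r.1 ∈ M ∧ ∃ x0 c',
      Relation.ReflTransGen (G.ModeStepB f m) [Sum.inl G.start] x0 ∧
      StepsNB (G.comp i) m c' x0 x ∧ c = min c' (mBound f)

theorem bInv_entry {x : SForm ℕ} {l : BLab G.deg} (hl : l ∈ bΛ G f m B)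
    (hx : Relation.ReflTransGen (G.ModeStepB f m) [Sum.inl G.start] x)
    (he : bEntry G (nts x) l) : bInv G f m B x l := by
  rcases he with rfl | ⟨j, r, rfl⟩
  · exact hx
  · exact ⟨rfl, hl.2.2.2.1, hl.2.2.2.2, x, 0, hx, rfl, by simp⟩

theorem bInv_step {p q : SForm ℕ × BLab G.deg}
    (h : GStep (bΛ G f m B) (bRule G B) (bSucc G f m) p q)
    (hp : bInv G f m B p.1 p.2) : bInv G f m B q.1 q.2 := by
  obtain ⟨x, l⟩ := p
  obtain ⟨y, l'⟩ := q
  obtain ⟨hΛ, hs, u, v, h1, h2⟩ := h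
  simp only at *
  cases l with
  | fin => exact hs.elim
  | start =>
    have hx : x = [Sum.inl B] := hp
    subst hx
    simp only [bRule] at h1 h2
    rcases u with _ | ⟨s, u⟩
    · simp only [List.nil_append, List.cons.injEq, true_and] at h1
      subst h1
      simp at h2
      subst h2
      exact bInv_entry hΛ .refl (by simpa [bSucc] using hs)
    · simp at h1
  | run M i c r =>
    obtain ⟨rfl, hr, hrM, x0, c', hx0, hst, rfl⟩ := hp
    simp only [bRule] at h1 h2
    subst h1 h2
    obtain ⟨hc, hs⟩ := hs
    rw [← nts_rep_erase] at hc hs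
    rw [← ntCount_eq] at hc
    have hst' : StepsNB (G.comp i) m (c' + 1) x0 (u ++ r.2 ++ v) :=
      stepsNB_trans hst (stepsNB_one ⟨r, hr, u, v, rfl, rfl⟩ hc)
    have hmin : min (min c' (mBound f) + 1) (mBound f) = min (c' + 1) (mBound f) := by omega
    rw [hmin] at hs
    rcases hs with ⟨r', rfl⟩ | ⟨hm, he⟩
    · exact ⟨rfl, hΛ.2.2.2.1, hΛ.2.2.2.2, x0, c' + 1, hx0, hst', rfl⟩
    · exact bInv_entry hΛ (hx0.tail ⟨i, _, hst', (modeM_iff _ _ _ _ le_rfl _).2 hm⟩) he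

/-- reachability -/
def bReach (G : CDGS ℕ) (f : Mode) (m B : ℕ) (x : SForm ℕ) (l : BLab G.deg) : Prop :=
  Relation.ReflTransGen (fun p q => GStep (bΛ G f m B) (bRule G B) (bSucc G f m) p q ∧
    ntCount q.1 ≤ m) ([Sum.inl B], .start) (x, l)

theorem bInner (hB : ∀ i, ∀ r ∈ G.comp i, r.1 < B ∧ ∀ a ∈ nts r.2, a < B)
    (i : Fin G.deg) (n : ℕ) : ∀ (c' : ℕ) (z y : SForm ℕ),
    (∀ a ∈ nts z, a < B) → ntCount z ≤ m →
    (∀ r ∈ G.comp i, r.1 ∈ nts z → bReach G f m B z (.run (nts z) i (min c' (mBound f)) r)) →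
    StepsNB (G.comp i) m (n + 1) z y → modeOK (G.comp i) f (c' + (n + 1)) y →
    ∀ l ∈ bΛ G f m B, bEntry G (nts y) l → bReach G f m B y l := by
  induction n with
  | zero =>
    rintro c' z y hz hzm hin ⟨z', ⟨r, hr, u, v, rfl, rfl⟩, hb, h⟩ hm l hl he
    simp only [StepsNB] at h
    subst h
    refine (hin r hr (by simp)).tail ⟨⟨hl, ⟨?_, Or.inr ⟨?_, ?_⟩⟩, u, v, rfl, rfl⟩, hb⟩
    · rw [← nts_rep_erase, ← ntCount_eq]; exact hb
    · rw [← nts_rep_erase]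
      have hmin : min (min c' (mBound f) + 1) (mBound f) = min (c' + 1) (mBound f) := by omega
      rw [hmin]
      exact (modeM_iff _ _ _ _ le_rfl _).1 hm
    · rw [← nts_rep_erase]; exact he
  | succ n ih =>
    rintro c' z y hz hzm hin ⟨z', hstep, hb, h⟩ hm l hl he
    have hz' := rstep_lt (fun r hr => (hB i r hr).2) hstep hz
    obtain ⟨r, hr, u, v, rfl, rfl⟩ := hstep
    refine ih (c' + 1) _ y hz' hb ?_ h (by convert hm using 1; omega) l hl he
    intro r' hr' hr'z
    refine (hin r hr (by simp)).tail ⟨⟨⟨?_, hz', min_le_right _ _, hr', hr'z⟩,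
      ⟨?_, Or.inl ⟨r', ?_⟩⟩, u, v, rfl, rfl⟩, hb⟩
    · rw [← ntCount_eq]; exact hb
    · rw [← nts_rep_erase, ← ntCount_eq]; exact hb
    · rw [← nts_rep_erase]
      have hmin : min (min c' (mBound f) + 1) (mBound f) = min (c' + 1) (mBound f) := by omega
      rw [hmin]

theorem bOuter (hB : ∀ i, ∀ r ∈ G.comp i, r.1 < B ∧ ∀ a ∈ nts r.2, a < B)
    (hs : G.start < B) (hm : 1 ≤ m) {x : SForm ℕ}
    (h : Relation.ReflTransGen (G.ModeStepB f m) [Sum.inl G.start] x) :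
    (∀ a ∈ nts x, a < B) ∧ ntCount x ≤ m ∧
    ∀ l ∈ bΛ G f m B, bEntry G (nts x) l → bReach G f m B x l := by
  induction h with
  | refl =>
    have h1 : ntCount ([Sum.inl G.start] : SForm ℕ) ≤ m := by simpa [ntCount_eq] using hm
    refine ⟨by simpa using hs, h1, fun l hl he => ?_⟩
    refine Relation.ReflTransGen.single ⟨⟨hl, ?_, [], [], rfl, rfl⟩, h1⟩
    simpa [bSucc] using he
  | @tail x y _ h2 ih =>
    obtain ⟨i, n, hst, hmo⟩ := h2
    obtain ⟨h1, h2, h3⟩ := ih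
    refine ⟨stepsNB_lt (fun r hr => (hB i r hr).2) hst h1, stepsNB_bd hst h2, ?_⟩
    cases n with
    | zero => simp only [StepsNB] at hst; subst hst; exact h3
    | succ n =>
      refine bInner hB i n 0 x y h1 h2 ?_ hst (by simpa using hmo)
      intro r hr hrx
      refine h3 _ ⟨by rw [← ntCount_eq]; exact h2, h1, by simp, hr, hrx⟩ (Or.inr ⟨i, r, ?_⟩)
      simp

end CDtoPG

theorem cd_sub_pg (lf : Bool) (f : Mode) : CDFamFinInf ℕ lf f ⊆ PFamFin ℕ lf false := by
  rintro L ⟨m, hm, G, hlf, hL, hind⟩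
  obtain ⟨B, hs, hB⟩ : ∃ B, G.start < B ∧
      ∀ i, ∀ r ∈ G.comp i, r.1 < B ∧ ∀ a ∈ nts r.2, a < B := by
    obtain ⟨B, hs, hB⟩ := exists_bound ((List.finRange G.deg).flatMap G.comp) G.start
    exact ⟨B, hs, fun i r hr => hB r (List.mem_flatMap.2 ⟨i, List.mem_finRange i, hr⟩)⟩
  obtain ⟨H, hac, hlam, hsound, hcomp⟩ := toPG (bΛ G f m B) (bΛ_fin G f m B) (bRule G B)
    (bSucc G f m) B
  have h1 : H.lang ⊆ G.langB f m := by
    intro w hw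
    obtain ⟨l₁, l₂, hl, h⟩ := hsound w hw
    have hne : ([Sum.inl B] : SForm ℕ) ≠ w.map Sum.inr := by
      intro h; have := congrArg nts h; simp at this
    have hne' : w.map Sum.inr ≠ ([Sum.inl G.start] : SForm ℕ) := by
      intro h; have := congrArg nts h; simp at this
    have hinit : bInv G f m B [Sum.inl B] l₁ := by
      rcases Relation.ReflTransGen.cases_head h with h | ⟨q, ⟨_, hsc, u, v, h2, _⟩, _⟩
      · simp only [Prod.mk.injEq] at h; exact absurd h.1 hne
      · cases l₁ with
        | start => rfl
        | fin => exact hsc.elim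
        | run M i c r =>
          have h3 : r.1 ∈ nts ([Sum.inl B] : SForm ℕ) := by
            simp only at h2; rw [h2]; simp [bRule]
          have := (hB i r hl.2.2.2.1).1
          simp at h3; omega
    have hall : ∀ q, Relation.ReflTransGen (GStep (bΛ G f m B) (bRule G B) (bSucc G f m))
        ([Sum.inl B], l₁) q → bInv G f m B q.1 q.2 := by
      intro q hq
      induction hq with
      | refl => exact hinit
      | tail _ h2 ih => exact bInv_step h2 ih
    have hfin := hall _ h
    refine ⟨by simpa [ntCount_eq] using hm, ?_⟩
    cases l₂ with
    | start => exact absurd (Eq.symm hfin) hne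
    | fin =>
      rcases Relation.reflTransGen_iff_eq_or_transGen.1 hfin with h | h
      · exact absurd h hne'
      · exact h
    | run M i c r =>
      obtain ⟨h1, _, h3, _⟩ := hfin
      rw [h1] at h3; simp at h3
  have h2 : G.langB f m ⊆ H.langB m := by
    rintro w ⟨_, hw⟩
    refine hcomp m w hm ⟨.start, .fin, trivial, ?_⟩
    exact (bOuter hB hs hm hw.to_reflTransGen).2.2 .fin trivial (Or.inl rfl)
  have heq : H.lang = G.lang f :=
    Set.Subset.antisymm (h1.trans (cd_langB_sub _ _ _))
      (hind.trans (h2.trans (pg_langB_sub _ _)))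
  refine ⟨m, hm, H, ?_, fun _ => hac, by rw [heq]; exact hL, h1.trans h2⟩
  intro hl
  apply hlam
  intro l hl'
  cases l with
  | start => simp [bRule]
  | fin => simp [bRule]
  | run M i c r => exact hlf hl i r hl'.2.2.2.1

/-- simultaneous substitution of nonterminals -/
def ext (η : ℕ → SForm ℕ) (y : SForm ℕ) : SForm ℕ :=
  y.flatMap (fun s => match s with | .inl a => η a | .inr t => [.inr t])

@[simp] theorem ext_nil (η : ℕ → SForm ℕ) : ext η [] = [] := rfl
@[simp] theorem ext_inl (η : ℕ → SForm ℕ) (a : ℕ) (y : SForm ℕ) :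
    ext η (.inl a :: y) = η a ++ ext η y := by simp [ext]
@[simp] theorem ext_inr (η : ℕ → SForm ℕ) (a : ℕ) (y : SForm ℕ) :
    ext η (.inr a :: y) = .inr a :: ext η y := by simp [ext]
@[simp] theorem ext_append (η : ℕ → SForm ℕ) (x y : SForm ℕ) :
    ext η (x ++ y) = ext η x ++ ext η y := by simp [ext]

theorem ext_congr {η θ : ℕ → SForm ℕ} {y : SForm ℕ} (h : ∀ a ∈ nts y, η a = θ a) :
    ext η y = ext θ y := by
  induction y with
  | nil => rfl
  | cons s y ih =>
    cases s with
    | inl a =>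
      simp only [nts_inl, Multiset.mem_cons, forall_eq_or_imp] at h
      simp [h.1, ih h.2]
    | inr a =>
      simp only [nts_inr] at h
      simp [ih h]

theorem ext_one (y : SForm ℕ) : ext (fun a => [.inl a]) y = y := by
  induction y with
  | nil => rfl
  | cons s y ih => cases s <;> simp [ih]

theorem ext_id {η : ℕ → SForm ℕ} {y : SForm ℕ} (h : ∀ a ∈ nts y, η a = [.inl a]) :
    ext η y = y := by
  rw [ext_congr h, ext_one]

theorem ext_ext (η θ : ℕ → SForm ℕ) (y : SForm ℕ) :
    ext η (ext θ y) = ext (fun a => ext η (θ a)) y := by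
  induction y with
  | nil => rfl
  | cons s y ih => cases s <;> simp [ih]

/-- core lemma on derivations in one component -/
theorem core {P : List (Rule ℕ)} {η : ℕ → SForm ℕ} {B : ℕ}
    (h1 : ∀ r ∈ P, ext η r.2 = η r.1)
    (h2 : ∀ r ∈ P, ∀ a ∈ nts r.2, a < B ∨ ∃ r' ∈ P, r'.1 = a)
    (h3 : ∀ a, a < B → (∀ r ∈ P, r.1 ≠ a) → η a = [.inl a])
    {m : ℕ} {x y : SForm ℕ} (h : StepsN P m x y) (hx : ∀ a ∈ nts x, a < B)
    (hy : ∀ r ∈ P, r.1 ∉ nts y) : y = ext η x ∧ ∀ a ∈ nts y, a < B := by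
  have key : ∀ m (x : SForm ℕ), StepsN P m x y → (∀ a ∈ nts x, a < B ∨ ∃ r' ∈ P, r'.1 = a) →
      ext η x = ext η y ∧ (∀ a ∈ nts y, a < B ∨ ∃ r' ∈ P, r'.1 = a) := by
    intro m
    induction m with
    | zero => intro x h hx; simp only [StepsN] at h; subst h; exact ⟨rfl, hx⟩
    | succ m ih =>
      rintro x ⟨z, ⟨r, hr, u, v, rfl, rfl⟩, h⟩ hx
      obtain ⟨h4, h5⟩ := ih _ h (by
        intro a ha
        simp only [nts_append, nts_inl, Multiset.mem_add, Multiset.mem_cons] at ha hx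
        rcases ha with (ha | ha) | ha
        · exact hx _ (Or.inl ha)
        · exact h2 r hr a ha
        · exact hx _ (Or.inr (Or.inr ha)))
      refine ⟨?_, h5⟩
      rw [← h4]
      simp [h1 r hr]
  obtain ⟨h4, h5⟩ := key m x h (fun a ha => Or.inl (hx a ha))
  have h6 : ∀ a ∈ nts y, a < B := by
    intro a ha
    rcases h5 a ha with h | ⟨r, hr, rfl⟩
    · exact h
    · exact absurd ha (hy r hr)
  refine ⟨?_, h6⟩
  rw [h4, ext_id]
  intro a ha
  refine h3 a (h6 a ha) ?_
  rintro r hr rfl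
  exact hy r hr ha

/-- weights -/
def wts (wt : ℕ → ℕ) (x : SForm ℕ) : ℕ := ((nts x).map wt).sum

theorem wts_append (wt : ℕ → ℕ) (x y : SForm ℕ) : wts wt (x ++ y) = wts wt x + wts wt y := by
  simp [wts]
theorem wts_inl (wt : ℕ → ℕ) (a : ℕ) (y : SForm ℕ) : wts wt (.inl a :: y) = wt a + wts wt y := by
  simp [wts]

theorem wts_steps {P : List (Rule ℕ)} {wt : ℕ → ℕ}
    (h1 : ∀ r ∈ P, wts wt r.2 + 1 = wt r.1) {m : ℕ} {x y : SForm ℕ} (h : StepsN P m x y) :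
    wts wt x = wts wt y + m := by
  induction m generalizing x with
  | zero => simp only [StepsN] at h; subst h; rfl
  | succ m ih =>
    obtain ⟨z, ⟨r, hr, u, v, rfl, rfl⟩, h⟩ := h
    have := ih h
    have h2 := h1 r hr
    simp only [wts_append, wts_inl] at this ⊢
    omega

/-- chain symbols -/
def cs (A B i : ℕ) : ℕ := if i = 0 then A else B + i

def chainR (A : ℕ) (w : SForm ℕ) (B n : ℕ) : List (Rule ℕ) :=
  (List.range n).map fun i => (cs A B i, if i + 1 < n then [.inl (cs A B (i + 1))] else w)

theorem mem_chainR {A B n : ℕ} {w : SForm ℕ} {r : Rule ℕ} : r ∈ chainR A w B n ↔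
    ∃ i < n, r = (cs A B i, if i + 1 < n then [.inl (cs A B (i + 1))] else w) := by
  simp [chainR, eq_comm]

theorem chain_steps {P : List (Rule ℕ)} {A B n b : ℕ} {w : SForm ℕ} (hn : 1 ≤ n)
    (hP : ∀ r ∈ chainR A w B n, r ∈ P) (u v : SForm ℕ)
    (hb1 : ntCount (u ++ .inl A :: v) ≤ b) (hb2 : ntCount (u ++ w ++ v) ≤ b) :
    StepsNB P b n (u ++ .inl A :: v) (u ++ w ++ v) := by
  have key : ∀ j, j + 1 ≤ n →
      StepsNB P b (j + 1) (u ++ .inl (cs A B (n - (j + 1))) :: v) (u ++ w ++ v) := by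
    intro j
    induction j with
    | zero =>
      intro hj
      refine stepsNB_one ⟨_, hP _ (mem_chainR.2 ⟨n - 1, by omega, rfl⟩), u, v, rfl, ?_⟩ hb2
      rw [if_neg (by omega)]
    | succ j ih =>
      intro hj
      refine ⟨u ++ [.inl (cs A B (n - (j + 1)))] ++ v,
        ⟨_, hP _ (mem_chainR.2 ⟨n - (j + 1 + 1), by omega, rfl⟩), u, v, rfl, ?_⟩, ?_, ?_⟩
      · rw [if_pos (by omega)]
        congr 5
        omega
      · simpa [ntCount_eq] using hb1
      · simpa using ih (by omega)
  have := key (n - 1) (by omega)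
  rw [show n - 1 + 1 = n by omega] at this
  simpa [cs] using this

/-- replacement of one nonterminal -/
def rep (A : ℕ) (w : SForm ℕ) (y : SForm ℕ) : SForm ℕ :=
  ext (fun a => if a = A then w else [.inl a]) y

theorem rep_of_notMem {A : ℕ} {w y : SForm ℕ} (h : A ∉ nts y) : rep A w y = y := by
  apply ext_id
  intro a ha
  rw [if_neg]
  rintro rfl
  exact h ha

@[simp] theorem rep_append (A : ℕ) (w x y : SForm ℕ) :
    rep A w (x ++ y) = rep A w x ++ rep A w y := ext_append _ _ _

theorem rep_cons_self (A : ℕ) (w y : SForm ℕ) :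
    rep A w (.inl A :: y) = w ++ rep A w y := by simp [rep]

theorem rep_cons_ne {A b : ℕ} (h : b ≠ A) (w y : SForm ℕ) :
    rep A w (.inl b :: y) = .inl b :: rep A w y := by simp [rep, h]

theorem rep_split {A : ℕ} {y : SForm ℕ} {R : Multiset ℕ} (h : nts y = A ::ₘ R) (hA : A ∉ R) :
    ∃ u v, y = u ++ .inl A :: v ∧ nts u + nts v = R ∧ ∀ w, rep A w y = u ++ w ++ v := by
  have : A ∈ nts y := by rw [h]; simp
  obtain ⟨u, v, rfl⟩ := List.append_of_mem (mem_nts.1 this)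
  have hR : nts u + nts v = R := by
    simpa using h
  refine ⟨u, v, rfl, hR, fun w => ?_⟩
  subst hR
  simp only [Multiset.mem_add, not_or] at hA
  rw [rep_append, rep_cons_self, rep_of_notMem hA.1, rep_of_notMem hA.2, List.append_assoc]

theorem nts_rep {A : ℕ} {y : SForm ℕ} {R : Multiset ℕ} (h : nts y = A ::ₘ R) (hA : A ∉ R)
    (w : SForm ℕ) : nts (rep A w y) = nts w + R := by
  obtain ⟨u, v, _, h2, h3⟩ := rep_split h hA
  rw [h3, ← h2]
  simp only [nts_append]
  abel

theorem cs_lt {A B i : ℕ} (_ : A < B) : i = 0 ∧ cs A B i = A ∨ i ≠ 0 ∧ cs A B i = B + i := by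
  unfold cs; split_ifs <;> simp_all

/-- component for t-like modes -/
def tComp (A : ℕ) (w : SForm ℕ) (B n : ℕ) (F : List ℕ) : List (Rule ℕ) :=
  chainR A w B n ++ F.map fun f => (f, [.inl f])

theorem tComp_sound {A B n : ℕ} {w : SForm ℕ} {F : List ℕ} (hn : 1 ≤ n) (hA : A < B)
    (hw : ∀ a ∈ nts w, a < B ∧ a ≠ A)
    {m : ℕ} {x y : SForm ℕ} (h : StepsN (tComp A w B n F) m x y) (hx : ∀ a ∈ nts x, a < B)
    (ht : ¬ ∃ z, RStep (tComp A w B n F) y z) :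
    y = rep A w x ∧ (∀ a ∈ nts y, a < B) ∧ ∀ f ∈ F, f ∉ nts y := by
  have hy : ∀ r ∈ tComp A w B n F, r.1 ∉ nts y := by
    intro r hr h
    exact ht (rstep_iff_nts.2 ⟨r, hr, h⟩)
  have hlhsA : ∃ r ∈ tComp A w B n F, r.1 = A :=
    ⟨_, List.mem_append_left _ (mem_chainR.2 ⟨0, hn, rfl⟩), by simp [cs]⟩
  have := core (η := fun a => if a = A ∨ B ≤ a then w else [.inl a]) (B := B) ?_ ?_ ?_ h hx hy
  · refine ⟨?_, this.2, ?_⟩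
    · rw [this.1, rep]
      apply ext_congr
      intro a ha
      have := Nat.not_le.2 (hx a ha)
      simp [this]
    · intro f hf
      exact hy (f, [.inl f]) (List.mem_append_right _ (List.mem_map.2 ⟨f, hf, rfl⟩))
  · intro r hr
    rcases List.mem_append.1 hr with hr | hr
    · obtain ⟨i, hi, rfl⟩ := mem_chainR.1 hr
      have e1 : (cs A B i = A ∨ B ≤ cs A B i) := by
        rcases cs_lt (i := i) hA with h | h <;> simp [h.2]
      have e2 : (cs A B (i+1) = A ∨ B ≤ cs A B (i+1)) := by
        rcases cs_lt (i := i+1) hA with h | h <;> simp [h.2]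
      simp only [if_pos e1]
      split_ifs
      · simp [e2]
      · apply ext_id
        intro a ha
        have := hw a ha
        rw [if_neg (by omega)]
    · obtain ⟨f, hf, rfl⟩ := List.mem_map.1 hr
      simp
  · intro r hr a ha
    rcases List.mem_append.1 hr with hr | hr
    · obtain ⟨i, hi, rfl⟩ := mem_chainR.1 hr
      simp only at ha
      split_ifs at ha with h
      · simp at ha
        exact Or.inr ⟨_, List.mem_append_left _ (mem_chainR.2 ⟨i + 1, h, rfl⟩), ha.symm⟩
      · exact Or.inl (hw a ha).1
    · obtain ⟨f, hf, rfl⟩ := List.mem_map.1 hr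
      simp at ha
      exact Or.inr ⟨_, List.mem_append_right _ (List.mem_map.2 ⟨f, hf, rfl⟩), ha.symm⟩
  · intro a ha hP
    obtain ⟨r, hr, rfl⟩ := hlhsA
    rw [if_neg]
    rintro (h | h)
    · exact hP r hr h.symm
    · omega

theorem tComp_complete {A B n b : ℕ} {w : SForm ℕ} {F : List ℕ} (hn : 1 ≤ n)
    {x : SForm ℕ} {R : Multiset ℕ} (hA : A < B) (hxR : nts x = A ::ₘ R) (hAR : A ∉ R)
    (hw : ∀ a ∈ nts w, a < B ∧ a ≠ A) (hx : ∀ a ∈ nts x, a < B)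
    (hb : ntCount x ≤ b) (hb2 : ntCount (rep A w x) ≤ b) (hF : ∀ f ∈ F, f ∉ nts (rep A w x)) :
    StepsNB (tComp A w B n F) b n x (rep A w x) ∧
      ¬ ∃ z, RStep (tComp A w B n F) (rep A w x) z := by
  have hnts := nts_rep hxR hAR w
  obtain ⟨u, v, rfl, h2, h3⟩ := rep_split hxR hAR
  constructor
  · rw [h3] at hb2 ⊢
    exact chain_steps hn (fun r hr => List.mem_append_left _ hr) u v hb hb2
  · rw [rstep_iff_nts]
    rintro ⟨r, hr, h⟩
    rcases List.mem_append.1 hr with hr | hr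
    · obtain ⟨i, hi, rfl⟩ := mem_chainR.1 hr
      simp only at h
      rw [hnts] at h
      have hR : ∀ a ∈ R, a < B := fun a ha => hx a (by rw [hxR]; simp [ha])
      rcases cs_lt (i := i) hA with ⟨_, h'⟩ | ⟨_, h'⟩
      · rw [h'] at h
        rcases Multiset.mem_add.1 h with h | h
        · exact (hw _ h).2 rfl
        · exact hAR h
      · rw [h'] at h
        rcases Multiset.mem_add.1 h with h | h
        · have := (hw _ h).1; omega
        · have := hR _ h; omega
    · obtain ⟨f, hf, rfl⟩ := List.mem_map.1 hr
      exact hF f hf h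

/-- chain component (single rule) for modes `=k`, `≥k` -/
theorem sComp_sound {A B n : ℕ} {w : SForm ℕ} (hn : 1 ≤ n) (hA : A < B)
    (hw : ∀ a ∈ nts w, a < B ∧ a ≠ A)
    {m : ℕ} {x y : SForm ℕ} (h : StepsN (chainR A w B n) m x y) (hx : ∀ a ∈ nts x, a < B)
    (hm : n ≤ m) (hnd : (nts x).Nodup) : A ∈ nts x ∧ y = rep A w x := by
  let wt : ℕ → ℕ := fun a => (if a = A then n else 0) + (if B ≤ a then n - (a - B) else 0)
  have hwt : ∀ z : SForm ℕ, (∀ a ∈ nts z, a < B) → wts wt z = n * (nts z).count A := by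
    intro z
    induction z with
    | nil => intro _; simp [wts]
    | cons s z ih =>
      cases s with
      | inl a =>
        intro hz
        simp only [nts_inl, Multiset.mem_cons, forall_eq_or_imp] at hz
        have := ih hz.2
        simp only [wts, nts_inl, Multiset.map_cons, Multiset.sum_cons, Multiset.count_cons] at *
        rw [this, mul_add]
        simp only [wt]
        rw [if_neg (c := B ≤ a) (by omega)]
        by_cases haA : a = A
        · subst haA; simp; omega
        · simp [haA, Ne.symm haA]
      | inr a => intro hz; exact ih (by simpa using hz)
  have hrule : ∀ r ∈ chainR A w B n, wts wt r.2 + 1 = wt r.1 := by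
    intro r hr
    obtain ⟨i, hi, rfl⟩ := mem_chainR.1 hr
    have e1 : wt (cs A B i) = n - i := by
      rcases cs_lt (i := i) hA with ⟨h, h'⟩ | ⟨h, h'⟩
      · rw [h']; simp only [wt]; rw [if_neg (c := B ≤ A) (by omega)]; simp [h]
      · rw [h']; simp only [wt]; rw [if_neg (c := B + i = A) (by omega)]; simp
    have e2 : wt (cs A B (i+1)) = n - (i + 1) := by
      rcases cs_lt (i := i+1) hA with ⟨h, h'⟩ | ⟨h, h'⟩
      · omega
      · rw [h']; simp only [wt]; rw [if_neg (c := B + (i+1) = A) (by omega)]; simp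
    simp only [e1]
    split_ifs with h
    · simp [wts, e2]; omega
    · rw [hwt w (fun a ha => (hw a ha).1), Multiset.count_eq_zero_of_notMem
        (fun h => (hw _ h).2 rfl)]
      omega
  have hs := wts_steps hrule h
  rw [hwt x hx] at hs
  have hc := Multiset.nodup_iff_count_le_one.1 hnd A
  have hc1 : (nts x).count A = 1 := by
    by_contra hne
    have : (nts x).count A = 0 := by omega
    rw [this] at hs; omega
  rw [hc1] at hs
  have hy0 : wts wt y = 0 := by omega
  refine ⟨Multiset.count_pos.1 (by omega), ?_⟩
  have hy : ∀ r ∈ chainR A w B n, r.1 ∉ nts y := by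
    intro r hr hry
    have h1 := hrule r hr
    have h2 := Multiset.single_le_sum (fun x _ => Nat.zero_le x) _ (Multiset.mem_map_of_mem wt hry)
    simp only [wts] at hy0 h1
    omega
  have h' : StepsN (tComp A w B n []) m x y := by simpa [tComp] using h
  refine (tComp_sound hn hA hw h' hx ?_).1
  rw [rstep_iff_nts]
  rintro ⟨r, hr, h⟩
  exact hy r (by simpa [tComp] using hr) h

/-- pair component for modes `=k`, `≥k` -/
theorem pComp_sound {A B a' b n : ℕ} {w2 : SForm ℕ} (hn : 1 ≤ n) (hA : A < B)
    (ha' : a' < B) (hb : b < B) (haA : a' ≠ A) (hab : a' ≠ b) (hbA : b ≠ A)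
    (hw : ∀ a ∈ nts w2, a < B ∧ a ≠ A ∧ a ≠ b)
    {m : ℕ} {x y : SForm ℕ} (h : StepsN (chainR A [.inl a'] B n ++ [(b, w2)]) m x y)
    (hx : ∀ a ∈ nts x, a < B)
    (hm : n + 1 ≤ m) (hnd : (nts x).Nodup) :
    A ∈ nts x ∧ b ∈ nts x ∧ y = rep b w2 (rep A [.inl a'] x) := by
  let wt : ℕ → ℕ := fun a => (if a = A then n else 0) + (if B ≤ a then n - (a - B) else 0) +
    (if a = b then 1 else 0)
  have hwt : ∀ z : SForm ℕ, (∀ a ∈ nts z, a < B) →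
      wts wt z = n * (nts z).count A + (nts z).count b := by
    intro z
    induction z with
    | nil => intro _; simp [wts]
    | cons s z ih =>
      cases s with
      | inl a =>
        intro hz
        simp only [nts_inl, Multiset.mem_cons, forall_eq_or_imp] at hz
        have := ih hz.2
        simp only [wts, nts_inl, Multiset.map_cons, Multiset.sum_cons, Multiset.count_cons] at *
        rw [this, mul_add]
        simp only [wt]
        rw [if_neg (c := B ≤ a) (by omega)]
        by_cases haA : a = A
        · subst haA; simp [hbA, Ne.symm hbA]; omega
        · by_cases hab : a = b
          · subst hab; simp [haA, Ne.symm haA]; omega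
          · simp [haA, Ne.symm haA, hab, Ne.symm hab]
      | inr a => intro hz; exact ih (by simpa using hz)
  have hrule : ∀ r ∈ chainR A [.inl a'] B n ++ [(b, w2)], wts wt r.2 + 1 = wt r.1 := by
    intro r hr
    rcases List.mem_append.1 hr with hr | hr
    · obtain ⟨i, hi, rfl⟩ := mem_chainR.1 hr
      have e1 : wt (cs A B i) = n - i := by
        rcases cs_lt (i := i) hA with ⟨h, h'⟩ | ⟨h, h'⟩
        · rw [h']; simp only [wt]; rw [if_neg (c := B ≤ A) (by omega)]; simp [h, Ne.symm hbA]
        · rw [h']; simp only [wt]; rw [if_neg (c := B + i = A) (by omega),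
            if_neg (c := B + i = b) (by omega)]; simp
      have e2 : wt (cs A B (i+1)) = n - (i + 1) := by
        rcases cs_lt (i := i+1) hA with ⟨h, h'⟩ | ⟨h, h'⟩
        · omega
        · rw [h']; simp only [wt]; rw [if_neg (c := B + (i+1) = A) (by omega),
            if_neg (c := B + (i+1) = b) (by omega)]; simp
      simp only [e1]
      split_ifs with h
      · simp [wts, e2]; omega
      · have : wts wt [.inl a'] = 0 := by
          rw [hwt]
          · simp [Ne.symm haA, Ne.symm hab]
          · simpa using ha'
        rw [this]
        omega
    · simp only [List.mem_singleton] at hr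
      subst hr
      simp only
      rw [hwt w2 (fun a ha => (hw a ha).1), Multiset.count_eq_zero_of_notMem
        (fun h => (hw _ h).2.1 rfl), Multiset.count_eq_zero_of_notMem
        (fun h => (hw _ h).2.2 rfl)]
      simp only [wt]
      rw [if_neg (c := B ≤ b) (by omega)]
      simp [hbA]
  have hs := wts_steps hrule h
  rw [hwt x hx] at hs
  have hc := Multiset.nodup_iff_count_le_one.1 hnd A
  have hcb := Multiset.nodup_iff_count_le_one.1 hnd b
  have hc1 : (nts x).count A = 1 := by
    by_contra hne
    have : (nts x).count A = 0 := by omega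
    rw [this] at hs; omega
  rw [hc1] at hs
  have hy0 : wts wt y = 0 := by omega
  refine ⟨Multiset.count_pos.1 (by omega), Multiset.count_pos.1 (by omega), ?_⟩
  have hy : ∀ r ∈ chainR A [.inl a'] B n ++ [(b, w2)], r.1 ∉ nts y := by
    intro r hr hry
    have h1 := hrule r hr
    have h2 := Multiset.single_le_sum (fun x _ => Nat.zero_le x) _ (Multiset.mem_map_of_mem wt hry)
    simp only [wts] at hy0 h1
    omega
  have := core (η := fun a => if a = A ∨ B ≤ a then [.inl a'] else if a = b then w2 else [.inl a])
    (B := B) ?_ ?_ ?_ h hx hy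
  · rw [this.1, rep, rep, ext_ext]
    apply ext_congr
    intro a ha
    have := hx a ha
    by_cases h1 : a = A
    · subst h1; simp [hab]
    · have h2 : ¬ B ≤ a := by omega
      by_cases h3 : a = b
      · subst h3; simp [h1, h2]
      · simp [h1, h2, h3]
  · intro r hr
    rcases List.mem_append.1 hr with hr | hr
    · obtain ⟨i, hi, rfl⟩ := mem_chainR.1 hr
      have e1 : (cs A B i = A ∨ B ≤ cs A B i) := by
        rcases cs_lt (i := i) hA with h | h <;> simp [h.2]
      have e2 : (cs A B (i+1) = A ∨ B ≤ cs A B (i+1)) := by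
        rcases cs_lt (i := i+1) hA with h | h <;> simp [h.2]
      simp only [if_pos e1]
      split_ifs
      · simp [e2]
      · have : ¬ B ≤ a' := by omega
        simp [haA, hab, this]
    · simp only [List.mem_singleton] at hr
      subst hr
      have : ¬ B ≤ b := by omega
      simp only [hbA, this, or_self, if_false, if_true]
      apply ext_id
      intro a ha
      have := hw a ha
      rw [if_neg (by omega), if_neg (by omega)]
  · intro r hr a ha
    rcases List.mem_append.1 hr with hr | hr
    · obtain ⟨i, hi, rfl⟩ := mem_chainR.1 hr
      simp only at ha
      split_ifs at ha with h
      · simp at ha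
        exact Or.inr ⟨_, List.mem_append_left _ (mem_chainR.2 ⟨i + 1, h, rfl⟩), ha.symm⟩
      · simp at ha; subst ha; exact Or.inl ha'
    · simp only [List.mem_singleton] at hr
      subst hr
      exact Or.inl (hw a ha).1
  · intro a ha hP
    have h1 : A ≠ a := by
      have := hP _ (List.mem_append_left _ (mem_chainR.2 ⟨0, hn, rfl⟩))
      simpa [cs] using this
    have h2 : b ≠ a := hP (b, w2) (List.mem_append_right _ (List.mem_singleton.2 rfl))
    have : ¬ B ≤ a := by omega
    simp [Ne.symm h1, Ne.symm h2, this]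

theorem pComp_complete {A B a' b n β : ℕ} {w2 : SForm ℕ} (hn : 1 ≤ n)
    {x : SForm ℕ} {R R' : Multiset ℕ} (hxR : nts x = A ::ₘ R) (hAR : A ∉ R)
    (hxR' : a' ::ₘ R = b ::ₘ R') (hbR : b ∉ R')
    (hb : ntCount x ≤ β) (hb2 : ntCount (rep b w2 (rep A [.inl a'] x)) ≤ β) :
    StepsNB (chainR A [.inl a'] B n ++ [(b, w2)]) β (n + 1) x
      (rep b w2 (rep A [.inl a'] x)) := by
  have hnts := nts_rep hxR hAR [.inl a']
  have hb1 : ntCount (rep A [.inl a'] x) ≤ β := by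
    rw [ntCount_eq, hnts] ; rw [ntCount_eq, hxR] at hb; simpa using hb
  have hnts' : nts (rep A [.inl a'] x) = b ::ₘ R' := by rw [hnts, ← hxR']; simp
  refine stepsNB_trans (y := rep A [.inl a'] x) ?_ ?_
  · obtain ⟨u, v, rfl, h2, h3⟩ := rep_split hxR hAR
    rw [h3] at hb1 ⊢
    exact chain_steps hn (fun r hr => List.mem_append_left _ hr) u v hb hb1
  · refine stepsNB_one ?_ hb2
    obtain ⟨u, v, h1, h2, h3⟩ := rep_split hnts' hbR
    exact ⟨(b, w2), by simp, u, v, h1, h3 w2⟩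

theorem exists_cdgs (C : Set (List (Rule ℕ))) (hC : C.Finite) (s : ℕ) :
    ∃ G : CDGS ℕ, G.start = s ∧ (∀ i, G.comp i ∈ C) ∧ ∀ P ∈ C, ∃ i, G.comp i = P := by
  have := hC.to_subtype
  obtain ⟨n, ⟨e⟩⟩ := Finite.exists_equiv_fin C
  exact ⟨⟨n, s, fun i => (e.symm i).1⟩, rfl, fun i => (e.symm i).2,
    fun P hP => ⟨e ⟨P, hP⟩, by simp⟩⟩

abbrev Sl (K B : ℕ) := Fin K × Fin B
abbrev MQ (L K B : ℕ) := Fin L × Sl K B × Finset (Sl K B)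

/-- nonterminals: start, slaves, masters, intermediate masters -/
inductive Sy (L K B : ℕ) where
  | st : Sy L K B
  | sl (s : Sl K B) : Sy L K B
  | ms (q : MQ L K B) : Sy L K B
  | mt (q : MQ L K B) (b : Sl K B) (f : Bool) (q' : MQ L K B) : Sy L K B

instance (L K B : ℕ) : Finite (Sy L K B) := by
  let g : Sy L K B → Option (Sl K B ⊕ MQ L K B ⊕ (MQ L K B × Sl K B × Bool × MQ L K B)) :=
    fun s => match s with
    | .st => none
    | .sl s => some (.inl s)
    | .ms q => some (.inr (.inl q))
    | .mt q b f q' => some (.inr (.inr (q, b, f, q')))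
  apply Finite.of_injective g
  intro s t h
  cases s <;> cases t <;> simp_all [g]

structure Ctx where
  G : PG ℕ
  m : ℕ
  K : ℕ
  B0 : ℕ
  B : ℕ
  e : Sy G.nLab K B0 → ℕ
  d : ℕ → Sy G.nLab K B0
  hd : ∀ s, d (e s) = s
  hB : ∀ s, e s < B
  hm : 1 ≤ m
  hK : 2 * m ≤ K
  hs : G.start < B0
  hr : ∀ l, (G.rule l).1 < B0 ∧ ∀ a ∈ nts (G.rule l).2, a < B0
  hac : G.NoAC

namespace Ctx
variable (X : Ctx)

abbrev S := Sy X.G.nLab X.K X.B0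
abbrev Q := MQ X.G.nLab X.K X.B0
abbrev L := Sl X.K X.B0

def decS : X.S → ℕ
  | .st => X.G.start
  | .sl s => s.2
  | .ms q => q.2.1.2
  | .mt q _ _ _ => q.2.1.2

def dec (y : SForm ℕ) : SForm ℕ := y.map (Sum.map (fun n => X.decS (X.d n)) id)

@[simp] theorem dec_nil : X.dec [] = [] := rfl
@[simp] theorem dec_append (x y : SForm ℕ) : X.dec (x ++ y) = X.dec x ++ X.dec y := by simp [dec]
@[simp] theorem dec_e (s : X.S) (y : SForm ℕ) :
    X.dec (.inl (X.e s) :: y) = .inl (X.decS s) :: X.dec y := by simp [dec, X.hd]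
@[simp] theorem dec_inr (s : ℕ) (y : SForm ℕ) : X.dec (.inr s :: y) = .inr s :: X.dec y := by
  simp [dec]
theorem dec_cons (s : Symb ℕ) (y : SForm ℕ) : X.dec (s :: y) = X.dec [s] ++ X.dec y := by
  simp [dec]
theorem ntCount_dec (y : SForm ℕ) : ntCount (X.dec y) = ntCount y := by
  induction y with
  | nil => rfl
  | cons s y ih => cases s <;> simpa [ntCount_eq, dec] using ih
@[simp] theorem dec_term (w : List ℕ) : X.dec (w.map Sum.inr) = w.map Sum.inr := by
  simp [dec]

@[simp] theorem e_inj {s t : X.S} : X.e s = X.e t ↔ s = t :=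
  ⟨fun h => by rw [← X.hd s, h, X.hd], fun h => by rw [h]⟩

theorem dec_rep {A : X.S} {w : SForm ℕ} (h : X.dec w = [.inl (X.decS A)]) (y : SForm ℕ) :
    X.dec (rep (X.e A) w y) = X.dec y := by
  induction y with
  | nil => rfl
  | cons s y ih =>
    cases s with
    | inr a => simpa [rep] using ih
    | inl a =>
      by_cases ha : a = X.e A
      · subst ha
        rw [rep_cons_self, dec_append, ih, h, dec_e]; rfl
      · rw [rep_cons_ne ha, dec_cons, ih, ← dec_cons]

def slaves (V : Finset X.L) : Multiset ℕ := V.val.map (fun s => X.e (.sl s))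
def conf (q : X.Q) : Multiset ℕ := X.e (.ms q) ::ₘ X.slaves q.2.2
def aS (f : Bool) (q q' : X.Q) : X.S := if f then .ms q' else .sl q.2.1

@[simp] theorem e_mem_slaves {V : Finset X.L} {s : X.S} :
    X.e s ∈ X.slaves V ↔ ∃ b ∈ V, s = .sl b := by
  simp [slaves, eq_comm]

@[simp] theorem e_mem_conf {q : X.Q} {s : X.S} :
    X.e s ∈ X.conf q ↔ s = .ms q ∨ ∃ b ∈ q.2.2, s = .sl b := by
  simp [conf]

theorem conf_lt {q : X.Q} {a : ℕ} (h : a ∈ X.conf q) : a < X.B := by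
  simp only [conf, slaves, Multiset.mem_cons, Multiset.mem_map] at h
  rcases h with rfl | ⟨s, _, rfl⟩ <;> exact X.hB _

theorem conf_e {q : X.Q} {a : ℕ} (h : a ∈ X.conf q) : ∃ s, a = X.e s := by
  simp only [conf, slaves, Multiset.mem_cons, Multiset.mem_map] at h
  rcases h with rfl | ⟨s, _, rfl⟩ <;> exact ⟨_, rfl⟩

theorem conf_nodup (q : X.Q) : (X.conf q).Nodup := by
  rw [conf, Multiset.nodup_cons]
  refine ⟨by simp, ?_⟩
  apply Multiset.Nodup.map _ q.2.2.nodup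
  intro s t h
  simpa using h

theorem slaves_erase {V : Finset X.L} {b : X.L} (h : b ∈ V) :
    X.slaves V = X.e (.sl b) ::ₘ X.slaves (V.erase b) := by
  rw [slaves, slaves, Finset.erase_val, ← Multiset.map_cons (fun s => X.e (.sl s)),
    Multiset.cons_erase h]

def Single (A : X.S) (w : SForm ℕ) : Prop :=
  (A = .st ∧ ∃ q : X.Q, (q.2.1.2 : ℕ) = X.G.start ∧ q.2.2 = ∅ ∧ w = [.inl (X.e (.ms q))]) ∨
  (∃ q : X.Q, A = .ms q ∧ q.2.2 = ∅ ∧ X.G.rule q.1 = ((q.2.1.2 : ℕ), X.dec w) ∧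
    ∃ p' ∈ X.G.succ q.1, nts w = 0 ∨ ∃ q' : X.Q, q'.1 = p' ∧ nts w = X.conf q' ∧ q' ≠ q)

def Pair (q : X.Q) (b : X.L) (f : Bool) (q' : X.Q) (w2 : SForm ℕ) : Prop :=
  b ∈ q.2.2 ∧ X.e (X.aS f q q') ::ₘ (nts w2 + X.slaves (q.2.2.erase b)) = X.conf q' ∧
  b ∉ q'.2.2 ∧ X.decS (X.aS f q q') = q.2.1.2 ∧
  ((X.dec w2 = [.inl (b.2 : ℕ)] ∧ q'.1 = q.1) ∨
   (X.G.rule q.1 = ((b.2 : ℕ), X.dec w2) ∧ q'.1 ∈ X.G.succ q.1))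

def D (x : SForm ℕ) (p : Fin X.G.nLab) : Prop :=
  ∃ r₁, Relation.ReflTransGen X.G.PStep ([Sum.inl X.G.start], r₁) (x, p)

theorem D_step {u v z : SForm ℕ} {A : ℕ} {p p' : Fin X.G.nLab} (h : X.D (u ++ .inl A :: v) p)
    (hr : X.G.rule p = (A, z)) (hp : p' ∈ X.G.succ p) : X.D (u ++ z ++ v) p' := by
  obtain ⟨r, h⟩ := h
  refine ⟨r, h.tail (Or.inl ⟨u, v, ?_, ?_, hp⟩)⟩
  · simp [hr]
  · simp [hr]

variable {X}

theorem Single.ne_nil {A : X.S} {w : SForm ℕ} (h : X.Single A w) (hl : X.G.LamFree) :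
    w ≠ [] := by
  rintro rfl
  rcases h with ⟨_, q, _, _, h⟩ | ⟨q, _, _, h, _⟩
  · simp at h
  · exact hl q.1 (by rw [h]; rfl)

theorem Single.nts {A : X.S} {w : SForm ℕ} (h : X.Single A w) :
    ∀ a ∈ nts w, a < X.B ∧ a ≠ X.e A := by
  intro a ha
  rcases h with ⟨rfl, q, _, _, rfl⟩ | ⟨q, rfl, _, h, p', _, h0 | ⟨q', _, h1, h2⟩⟩
  · simp at ha; subst ha
    exact ⟨X.hB _, by simp⟩
  · rw [h0] at ha; simp at ha
  · rw [h1] at ha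
    refine ⟨X.conf_lt ha, ?_⟩
    rintro rfl
    simp at ha
    exact h2 ha.symm

section pair
variable {q : X.Q} {b : X.L} {f : Bool} {q' : X.Q} {w2 : SForm ℕ}

theorem Pair.ne (h : X.Pair q b f q' w2) : q ≠ q' := by
  rintro rfl
  exact h.2.2.1 h.1

theorem Pair.nil (h : X.Pair q b f q' w2) (hl : X.G.LamFree) : w2 ≠ [] := by
  rintro rfl
  rcases h with ⟨_, _, _, _, ⟨h, _⟩ | ⟨h, _⟩⟩
  · simp at h
  · exact hl q.1 (by rw [h]; rfl)

theorem Pair.conf' (h : X.Pair q b f q' w2) {a : ℕ} (ha : a ∈ nts w2) : a ∈ X.conf q' := by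
  rw [← h.2.1]; simp [ha]

theorem Pair.a_conf (h : X.Pair q b f q' w2) : X.e (X.aS f q q') ∈ X.conf q' := by
  rw [← h.2.1]; exact Multiset.mem_cons_self _ _

theorem Pair.b_conf (h : X.Pair q b f q' w2) : X.e (.sl b) ∉ X.conf q' := by
  simpa using h.2.2.1

theorem Pair.a_ne_b (h : X.Pair q b f q' w2) : X.aS f q q' ≠ .sl b := by
  intro h'
  have := h.a_conf
  rw [h'] at this
  exact h.b_conf this

theorem Pair.q_conf (h : X.Pair q b f q' w2) : X.e (.ms q) ∉ X.conf q' := by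
  simpa using h.ne

theorem mt_conf {q1 : X.Q} : X.e (.mt q b f q') ∉ X.conf q1 := by simp

theorem Pair.w (h : X.Pair q b f q' w2) : ∀ a ∈ CDHybrid.nts w2, a < X.B ∧ a ≠ X.e (.sl b) ∧
    a ≠ X.e (.ms q) ∧ ∀ q1 b1 f1 q1', a ≠ X.e (.mt q1 b1 f1 q1') := by
  intro a ha
  have hc := h.conf' ha
  refine ⟨X.conf_lt hc, ?_, ?_, ?_⟩
  · rintro rfl; exact h.b_conf hc
  · rintro rfl; exact h.q_conf hc
  · rintro q1 b1 f1 q1' rfl; exact mt_conf hc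

end pair

def J0 (X : Ctx) (y : SForm ℕ) : Prop := ∃ q, nts y = X.conf q ∧ X.D (X.dec y) q.1
def JT (X : Ctx) (y : SForm ℕ) : Prop := nts y = 0 ∧ ∃ p, X.D (X.dec y) p
def J1 (q : X.Q) (b : X.L) (f : Bool) (q' : X.Q) (y : SForm ℕ) : Prop :=
  nts y = X.e (.mt q b f q') ::ₘ X.slaves q.2.2 ∧ X.D (X.dec y) q.1
def J2 (q : X.Q) (b : X.L) (f : Bool) (q' : X.Q) (y : SForm ℕ) : Prop :=
  ∃ w2, X.Pair q b f q' w2 ∧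
  nts y = X.e (.mt q b f q') ::ₘ (nts w2 + X.slaves (q.2.2.erase b)) ∧ X.D (X.dec y) q'.1

theorem L_init {w : SForm ℕ} (h : X.Single .st w) : X.J0 (rep (X.e .st) w [.inl (X.e .st)]) := by
  rcases h with ⟨_, q, h1, h2, rfl⟩ | ⟨q, h, _⟩
  · rw [rep_cons_self]
    refine ⟨q, by simp [rep, conf, h2, slaves], q.1, ?_⟩
    simp [rep, decS, h1]
    exact .refl
  · simp at h

theorem L_single {q : X.Q} {y w : SForm ℕ} (hy : nts y = X.conf q) (hD : X.D (X.dec y) q.1)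
    (h : X.Single (.ms q) w) :
    X.J0 (rep (X.e (.ms q)) w y) ∨ X.JT (rep (X.e (.ms q)) w y) := by
  rcases h with ⟨h, _⟩ | ⟨q1, h1, h2, h3, p', hp', h4⟩
  · simp at h
  · simp only [Sy.ms.injEq] at h1
    subst h1
    have hy0 : nts y = X.e (.ms q) ::ₘ 0 := by rw [hy, conf, h2]; rfl
    have hn := nts_rep hy0 (by simp) w
    obtain ⟨u, v, rfl, _, h6⟩ := rep_split hy0 (by simp)
    have hD' : X.D (X.dec (rep (X.e (.ms q)) w (u ++ .inl (X.e (.ms q)) :: v))) p' := by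
      rw [h6]
      simp only [dec_append, dec_e] at hD ⊢
      exact X.D_step hD h3 hp'
    rcases h4 with h4 | ⟨q', rfl, h4, _⟩
    · right
      exact ⟨by rw [hn, h4]; rfl, p', hD'⟩
    · left
      exact ⟨q', by rw [hn, h4]; simp, hD'⟩

theorem L1 {q : X.Q} (b : X.L) (f : Bool) (q' : X.Q) {y : SForm ℕ}
    (hy : nts y = X.conf q) (hD : X.D (X.dec y) q.1) :
    J1 q b f q' (rep (X.e (.ms q)) [.inl (X.e (.mt q b f q'))] y) := by
  refine ⟨?_, ?_⟩
  · rw [nts_rep hy (by simp)]; simp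
  · rw [dec_rep]
    · exact hD
    · simp [decS]

theorem L2 {q : X.Q} {b : X.L} {f : Bool} {q' : X.Q} {y w2 : SForm ℕ}
    (h : J1 q b f q' y) (hp : X.Pair q b f q' w2) : J2 q b f q' (rep (X.e (.sl b)) w2 y) := by
  obtain ⟨h1, h2⟩ := h
  have hy : nts y = X.e (.sl b) ::ₘ (X.e (.mt q b f q') ::ₘ X.slaves (q.2.2.erase b)) := by
    rw [h1, X.slaves_erase hp.1, Multiset.cons_swap]
  refine ⟨w2, hp, ?_, ?_⟩
  · rw [nts_rep hy (by simp)]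
    simp
  · rcases hp.2.2.2.2 with ⟨h3, h4⟩ | ⟨h3, h4⟩
    · rw [X.dec_rep (A := .sl b) (by simpa [decS] using h3), h4]; exact h2
    · obtain ⟨u, v, rfl, _, h6⟩ := rep_split hy (by simp)
      rw [h6]
      simp only [dec_append, dec_e] at h2 ⊢
      exact X.D_step h2 h3 h4

theorem L3 {q : X.Q} {b : X.L} {f : Bool} {q' : X.Q} {y : SForm ℕ}
    (h : J2 q b f q' y) : X.J0 (rep (X.e (.mt q b f q')) [.inl (X.e (X.aS f q q'))] y) := by
  obtain ⟨w2, hp, h1, h2⟩ := h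
  refine ⟨q', ?_, ?_⟩
  · rw [nts_rep h1, ← hp.2.1]
    · simp
    · intro hm
      apply mt_conf (q1 := q') (q := q) (b := b) (f := f) (q' := q')
      rw [← hp.2.1]
      exact Multiset.mem_cons_of_mem hm
  · rw [dec_rep]
    · exact h2
    · rw [dec_e, hp.2.2.2.1]; rfl

theorem rep3 {q : X.Q} {b : X.L} {f : Bool} {q' : X.Q} {y w2 : SForm ℕ}
    (hy : nts y = X.conf q) (hp : X.Pair q b f q' w2) :
    rep (X.e (.sl b)) w2 (rep (X.e (.ms q)) [.inl (X.e (X.aS f q q'))] y) =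
    rep (X.e (.mt q b f q')) [.inl (X.e (X.aS f q q'))] (rep (X.e (.sl b)) w2
      (rep (X.e (.ms q)) [.inl (X.e (.mt q b f q'))] y)) := by
  simp only [rep, ext_ext]
  apply ext_congr
  intro a ha
  rw [hy] at ha
  obtain ⟨s, rfl⟩ := X.conf_e ha
  by_cases h1 : s = .ms q
  · subst h1
    simp [hp.a_ne_b]
  · by_cases h2 : s = .sl b
    · subst h2
      simp only [e_inj, reduceCtorEq, if_false, ext_inl, if_true, ext_nil, List.append_nil]
      symm
      apply ext_id
      intro a ha
      rw [if_neg ((hp.w a ha).2.2.2 _ _ _ _)]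
    · have h3 : s ≠ .mt q b f q' := by
        rintro rfl
        exact mt_conf ha
      simp [h1, h2, h3]

end Ctx

namespace Ctx
variable {X : Ctx}

theorem fin_fiber (X : Ctx) (z : SForm ℕ) :
    {w : SForm ℕ | (∀ a ∈ nts w, a < X.B) ∧ X.dec w = z}.Finite := by
  induction z with
  | nil =>
    refine (Set.finite_singleton ([] : SForm ℕ)).subset ?_
    rintro w ⟨_, h⟩
    simpa [dec] using h
  | cons c z ih =>
    have hS : ((Set.Iio X.B).image (Sum.inl : ℕ → Symb ℕ) ∪ {c}).Finite :=
      ((Set.finite_Iio _).image _).union (Set.finite_singleton _)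
    refine (Set.Finite.image2 List.cons hS ih).subset ?_
    rintro w ⟨h1, h2⟩
    cases w with
    | nil => simp at h2
    | cons s w =>
      cases s with
      | inl a =>
        simp only [nts_inl, Multiset.mem_cons, forall_eq_or_imp] at h1
        refine ⟨.inl a, Or.inl ⟨a, h1.1, rfl⟩, w, ⟨h1.2, ?_⟩, rfl⟩
        rw [dec_cons] at h2
        exact (List.cons.inj h2).2
      | inr a =>
        rw [dec_inr] at h2
        refine ⟨.inr a, Or.inr (List.cons.inj h2).1, w, ⟨by simpa using h1, ?_⟩, rfl⟩
        exact (List.cons.inj h2).2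

def Z (X : Ctx) : Set (SForm ℕ) :=
  Set.range (fun l => (X.G.rule l).2) ∪ Set.range (fun b : X.L => [.inl (b.2 : ℕ)])

def WS (X : Ctx) : Set (SForm ℕ) := {w | (∀ a ∈ nts w, a < X.B) ∧ X.dec w ∈ X.Z}

theorem WS_fin (X : Ctx) : X.WS.Finite := by
  have hZ : X.Z.Finite := (Set.finite_range _).union (Set.finite_range _)
  refine (hZ.biUnion (fun z _ => X.fin_fiber z)).subset ?_
  rintro w ⟨h1, h2⟩
  simp only [Set.mem_iUnion]
  exact ⟨_, h2, h1, rfl⟩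

theorem Single.ws {A : X.S} {w : SForm ℕ} (h : X.Single A w) : w ∈ X.WS := by
  refine ⟨fun a ha => (h.nts a ha).1, ?_⟩
  rcases h with ⟨_, q, _, _, rfl⟩ | ⟨q, _, _, h, _⟩
  · right; exact ⟨q.2.1, by simp [decS]⟩
  · left; exact ⟨q.1, by simp [h]⟩

theorem Pair.ws {q : X.Q} {b : X.L} {f : Bool} {q' : X.Q} {w2 : SForm ℕ}
    (h : X.Pair q b f q' w2) : w2 ∈ X.WS := by
  refine ⟨fun a ha => (h.w a ha).1, ?_⟩
  rcases h.2.2.2.2 with ⟨h, _⟩ | ⟨h, _⟩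
  · right; exact ⟨b, h.symm⟩
  · left; exact ⟨q.1, by simp [h]⟩

theorem fin_img {α : Type} [Finite α] (X : Ctx) (R : α → SForm ℕ → Prop)
    (hR : ∀ a w, R a w → w ∈ X.WS) (g : α → SForm ℕ → List (Rule ℕ)) :
    {P | ∃ a w, R a w ∧ P = g a w}.Finite := by
  refine (Set.Finite.image2 g (Set.finite_univ) X.WS_fin).subset ?_
  rintro P ⟨a, w, h, rfl⟩
  exact ⟨a, trivial, w, hR a w h, rfl⟩

inductive MacB (X : Ctx) : SForm ℕ → SForm ℕ → Prop
  | single (A : X.S) (w y : SForm ℕ) (h : X.Single A w) (hy : nts y = X.e A ::ₘ 0)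
      (hb : ntCount y ≤ X.m) (hb2 : ntCount (rep (X.e A) w y) ≤ X.m) :
      MacB X y (rep (X.e A) w y)
  | pair (q : X.Q) (b : X.L) (f : Bool) (q' : X.Q) (w2 y : SForm ℕ) (h : X.Pair q b f q' w2)
      (hy : nts y = X.conf q) (hb : ntCount y ≤ X.m)
      (hb2 : ntCount (rep (X.e (.sl b)) w2 (rep (X.e (.ms q)) [.inl (X.e (X.aS f q q'))] y))
        ≤ X.m) :
      MacB X y (rep (X.e (.sl b)) w2 (rep (X.e (.ms q)) [.inl (X.e (X.aS f q q'))] y))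

theorem fresh (X : Ctx) (z : SForm ℕ) (hz : ∀ a ∈ nts z, a < X.B0) (U : Finset X.L)
    (hU : U.card + ntCount z ≤ X.K) : ∃ (w : SForm ℕ) (W : Finset X.L),
      nts w = X.slaves W ∧ (∀ c ∈ W, c ∉ U) ∧ X.dec w = z := by
  induction z generalizing U with
  | nil => exact ⟨[], ∅, by simp [slaves], by simp, rfl⟩
  | cons s z ih =>
    rw [ntCount_eq] at hU
    cases s with
    | inr a =>
      obtain ⟨w, W, h1, h2, h3⟩ := ih (by simpa using hz) U (by simpa [ntCount_eq] using hU)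
      exact ⟨.inr a :: w, W, by simpa using h1, h2, by simp [h3]⟩
    | inl a =>
      simp only [nts_inl, Multiset.mem_cons, forall_eq_or_imp, Multiset.card_cons] at hz hU
      have : ∃ i : Fin X.K, (i, (⟨a, hz.1⟩ : Fin X.B0)) ∉ U := by
        by_contra hcon
        push Not at hcon
        have : (Finset.univ : Finset (Fin X.K)).card ≤ U.card :=
          Finset.card_le_card_of_injOn (fun i => (i, ⟨a, hz.1⟩)) (fun i _ => hcon i)
            (fun i _ j _ h => (Prod.mk.inj h).1)
        simp at this
        omega
      obtain ⟨i, hi⟩ := this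
      obtain ⟨w, W, h1, h2, h3⟩ := ih hz.2 (insert (i, ⟨a, hz.1⟩) U) (by
        rw [Finset.card_insert_of_notMem hi, ntCount_eq]; omega)
      have hiW : (i, (⟨a, hz.1⟩ : Fin X.B0)) ∉ W := fun h => by
        have := h2 _ h; simp at this
      refine ⟨.inl (X.e (.sl (i, ⟨a, hz.1⟩))) :: w, insert (i, ⟨a, hz.1⟩) W, ?_, ?_, ?_⟩
      · rw [nts_inl, h1, X.slaves_erase (Finset.mem_insert_self _ _),
          Finset.erase_insert hiW]
      · intro c hc
        rcases Finset.mem_insert.1 hc with rfl | hc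
        · exact hi
        · intro h; exact h2 c hc (Finset.mem_insert_of_mem h)
      · simp [h3, decS]

theorem rep_occ {a : ℕ} {u v : SForm ℕ} (h : (nts (u ++ .inl a :: v)).Nodup) (w : SForm ℕ) :
    rep a w (u ++ .inl a :: v) = u ++ w ++ v := by
  have h' : nts (u ++ .inl a :: v) = a ::ₘ (nts u + nts v) := by simp
  rw [h', Multiset.nodup_cons, Multiset.mem_add, not_or] at h
  rw [rep_append, rep_cons_self, rep_of_notMem h.1.1, rep_of_notMem h.1.2, List.append_assoc]

theorem Pair.nts1 {q : X.Q} {b : X.L} {f : Bool} {q' : X.Q} {y w2 : SForm ℕ}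
    (hp : X.Pair q b f q' w2) (hy : nts y = X.conf q) :
    nts (rep (X.e (.ms q)) [.inl (X.e (X.aS f q q'))] y) =
      X.e (.sl b) ::ₘ X.e (X.aS f q q') ::ₘ X.slaves (q.2.2.erase b) ∧
      X.e (.sl b) ∉ X.e (X.aS f q q') ::ₘ X.slaves (q.2.2.erase b) := by
  refine ⟨?_, ?_⟩
  · rw [nts_rep hy (by simp), X.slaves_erase hp.1]; simp [Multiset.cons_swap (X.e (.sl b))]
  · simp [hp.a_ne_b.symm]

theorem Pair.nts2 {q : X.Q} {b : X.L} {f : Bool} {q' : X.Q} {y w2 : SForm ℕ}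
    (hp : X.Pair q b f q' w2) (hy : nts y = X.conf q) :
    nts (rep (X.e (.sl b)) w2 (rep (X.e (.ms q)) [.inl (X.e (X.aS f q q'))] y)) = X.conf q' := by
  obtain ⟨h1, h2⟩ := hp.nts1 hy
  rw [nts_rep h1 h2, ← hp.2.1]
  simp

theorem slaves_union {V W : Finset X.L} (h : Disjoint V W) :
    X.slaves (V ∪ W) = X.slaves V + X.slaves W := by
  have : (V ∪ W).val = V.val + W.val := by
    rw [← Finset.disjUnion_eq_union _ _ h]; rfl
  rw [slaves, this, Multiset.map_add]; rfl

theorem card_conf (q : X.Q) : (X.conf q).card = q.2.2.card + 1 := by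
  simp [conf, slaves]

theorem slave_step {q : X.Q} {b : X.L} {u v z : SForm ℕ} {p' : Fin X.G.nLab}
    (hy : nts (u ++ .inl (X.e (.sl b)) :: v) = X.conf q) (ho : q.2.1 ∉ q.2.2) (hb : b ∈ q.2.2)
    (hr : X.G.rule q.1 = ((b.2 : ℕ), z)) (hp' : p' ∈ X.G.succ q.1)
    (hm : ntCount (u ++ .inl (X.e (.sl b)) :: v) ≤ X.m)
    (hm2 : ntCount (X.dec u ++ z ++ X.dec v) ≤ X.m) :
    ∃ (y' : SForm ℕ) (q' : X.Q), X.MacB (u ++ .inl (X.e (.sl b)) :: v) y' ∧ q'.1 = p' ∧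
      q'.2.1 ∉ q'.2.2 ∧ nts y' = X.conf q' ∧ X.dec y' = X.dec u ++ z ++ X.dec v := by
  have hz : ∀ a ∈ nts z, a < X.B0 := by have := (X.hr q.1).2; rwa [hr] at this
  have hc1 : q.2.2.card + 1 ≤ X.m := by rwa [ntCount_eq, hy, card_conf] at hm
  have hc2 : ntCount z ≤ X.m := by
    rw [ntCount_eq] at hm2 ⊢; simp at hm2; omega
  obtain ⟨w2, W, h1, h2, h3⟩ := X.fresh z hz (insert q.2.1 q.2.2) (by
    rw [Finset.card_insert_of_notMem ho]; have := X.hK; omega)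
  have h2' : ∀ c ∈ W, c ≠ q.2.1 ∧ c ∉ q.2.2 := by simpa using h2
  let q' : X.Q := (p', q.2.1, W ∪ q.2.2.erase b)
  have hdis : Disjoint W (q.2.2.erase b) := by
    rw [Finset.disjoint_left]
    intro c hc hc'
    exact (h2' c hc).2 (Finset.mem_of_mem_erase hc')
  have hp : X.Pair q b true q' w2 := by
    refine ⟨hb, ?_, ?_, ?_, Or.inr ⟨?_, hp'⟩⟩
    · rw [conf, slaves_union hdis, h1]; rfl
    · simp only [q', Finset.mem_union, not_or]
      exact ⟨fun h => (h2' b h).2 hb, by simp⟩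
    · simp [aS, decS, q']
    · rw [hr, h3]
  have hn := hp.nts2 hy
  have hd : X.dec (rep (X.e (.sl b)) w2 (rep (X.e (.ms q)) [.inl (X.e (X.aS true q q'))]
      (u ++ .inl (X.e (.sl b)) :: v))) = X.dec u ++ z ++ X.dec v := by
    have h4 := (hp.nts1 hy).1
    rw [rep_append, rep_cons_ne (by simp)] at h4 ⊢
    have hdec : X.dec [.inl (X.e (X.aS true q q'))] = [.inl (X.decS (.ms q))] := by
      rw [dec_e]; rfl
    rw [rep_occ, dec_append, dec_append, X.dec_rep hdec, X.dec_rep hdec, h3]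
    rw [h4, Multiset.nodup_cons]
    refine ⟨(hp.nts1 hy).2, ?_⟩
    rw [Multiset.nodup_cons]
    refine ⟨by simp [aS], ?_⟩
    exact (Multiset.nodup_cons.1 (X.conf_nodup (q.1, q.2.1, q.2.2.erase b))).2
  refine ⟨_, q', .pair q b true q' w2 _ hp hy hm ?_, rfl, ?_, hn, hd⟩
  · rw [← X.ntCount_dec, hd]; exact hm2
  · simp only [q', Finset.mem_union, not_or]
    exact ⟨fun h => (h2' _ h).1 rfl, fun h => ho (Finset.mem_of_mem_erase h)⟩

theorem pass_step {q : X.Q} {b : X.L} {u v : SForm ℕ}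
    (hy : nts (u ++ .inl (X.e (.ms q)) :: v) = X.conf q) (ho : q.2.1 ∉ q.2.2) (hb : b ∈ q.2.2)
    (hm : ntCount (u ++ .inl (X.e (.ms q)) :: v) ≤ X.m) :
    ∃ (u' v' : SForm ℕ) (q' : X.Q), X.MacB (u ++ .inl (X.e (.ms q)) :: v)
      (u' ++ .inl (X.e (.sl q.2.1)) :: v') ∧ q'.1 = q.1 ∧
      q'.2.1 ∉ q'.2.2 ∧ q.2.1 ∈ q'.2.2 ∧ nts (u' ++ .inl (X.e (.sl q.2.1)) :: v') = X.conf q' ∧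
      X.dec u' = X.dec u ∧ X.dec v' = X.dec v := by
  let q' : X.Q := (q.1, b, insert q.2.1 (q.2.2.erase b))
  have hob : q.2.1 ≠ b := fun h => ho (h ▸ hb)
  have ho' : q.2.1 ∉ q.2.2.erase b := fun h => ho (Finset.mem_of_mem_erase h)
  have hp : X.Pair q b false q' [.inl (X.e (.ms q'))] := by
    refine ⟨hb, ?_, ?_, ?_, Or.inl ⟨?_, rfl⟩⟩
    · rw [conf, X.slaves_erase (Finset.mem_insert_self q.2.1 _), Finset.erase_insert ho',
        Multiset.cons_swap]
      simp [aS]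
    · simp [q', hob.symm]
    · simp [aS, decS]
    · simp [decS, q']
  have hdec : X.dec [.inl (X.e (X.aS false q q'))] = [.inl (X.decS (.ms q))] := by
    rw [dec_e]; rfl
  have hdec2 : X.dec [.inl (X.e (.ms q'))] = [.inl (X.decS (.sl b))] := by
    rw [dec_e]; rfl
  have hn := hp.nts2 hy
  have hd : rep (X.e (.sl b)) [.inl (X.e (.ms q'))] (rep (X.e (.ms q))
      [.inl (X.e (X.aS false q q'))] (u ++ .inl (X.e (.ms q)) :: v)) =
      rep (X.e (.sl b)) [.inl (X.e (.ms q'))] (rep (X.e (.ms q)) [.inl (X.e (X.aS false q q'))] u)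
      ++ .inl (X.e (.sl q.2.1)) ::
      rep (X.e (.sl b)) [.inl (X.e (.ms q'))] (rep (X.e (.ms q)) [.inl (X.e (X.aS false q q'))] v)
      := by
    rw [rep_append, rep_cons_self, rep_append, rep_append]
    have : X.aS false q q' = .sl q.2.1 := rfl
    rw [this, rep_cons_ne (by simpa using hob)]
    simp [rep]
  have hM : X.MacB (u ++ .inl (X.e (.ms q)) :: v) _ := .pair q b false q' _ _ hp hy hm (by
    rw [ntCount_eq, hn]
    rw [ntCount_eq, hy, card_conf] at hm
    rw [card_conf, Finset.card_insert_of_notMem ho', Finset.card_erase_of_mem hb]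
    have := Finset.card_pos.2 ⟨b, hb⟩
    omega)
  rw [hd] at hM hn
  refine ⟨_, _, q', hM, rfl, ?_, Finset.mem_insert_self _ _, hn, ?_, ?_⟩
  · simp [q', hob.symm]
  · rw [X.dec_rep hdec2, X.dec_rep hdec]
  · rw [X.dec_rep hdec2, X.dec_rep hdec]

theorem last_step {q : X.Q} {u v z : SForm ℕ} {p' : Fin X.G.nLab}
    (hy : nts (u ++ .inl (X.e (.ms q)) :: v) = X.conf q) (hV : q.2.2 = ∅)
    (hr : X.G.rule q.1 = ((q.2.1.2 : ℕ), z)) (hp' : p' ∈ X.G.succ q.1)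
    (hm : ntCount (u ++ .inl (X.e (.ms q)) :: v) ≤ X.m)
    (hm2 : ntCount (X.dec u ++ z ++ X.dec v) ≤ X.m) :
    ∃ (y' : SForm ℕ), X.MacB (u ++ .inl (X.e (.ms q)) :: v) y' ∧
      X.dec y' = X.dec u ++ z ++ X.dec v ∧ (nts y' = 0 ∨ ∃ q' : X.Q, q'.1 = p' ∧
      q'.2.1 ∉ q'.2.2 ∧ nts y' = X.conf q') := by
  have hz : ∀ a ∈ nts z, a < X.B0 := by have := (X.hr q.1).2; rwa [hr] at this
  have hc2 : ntCount z ≤ X.m := by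
    rw [ntCount_eq] at hm2 ⊢; simp at hm2; omega
  have hy0 : nts (u ++ .inl (X.e (.ms q)) :: v) = X.e (.ms q) ::ₘ 0 := by
    rw [hy, conf, hV]; rfl
  have key : ∀ w, X.Single (.ms q) w → X.dec w = z →
      X.MacB (u ++ .inl (X.e (.ms q)) :: v) (u ++ w ++ v) ∧
      X.dec (u ++ w ++ v) = X.dec u ++ z ++ X.dec v ∧ nts (u ++ w ++ v) = nts w := by
    intro w hw hdw
    have hrep := rep_occ (by rw [hy]; exact X.conf_nodup q) w (u := u) (v := v)
    have hd : X.dec (u ++ w ++ v) = X.dec u ++ z ++ X.dec v := by simp [hdw]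
    refine ⟨?_, hd, ?_⟩
    · rw [← hrep]
      refine .single _ _ _ hw hy0 hm ?_
      rw [hrep, ← X.ntCount_dec, hd]; exact hm2
    · rw [← hrep, nts_rep hy0 (by simp)]; simp
  obtain ⟨w, W, h1, h2, h3⟩ := X.fresh z hz {q.2.1} (by
    have := X.hK; have := X.hm; simp; omega)
  rcases W.eq_empty_or_nonempty with rfl | ⟨c, hc⟩
  · have hw0 : nts w = 0 := by rw [h1]; rfl
    obtain ⟨k1, k2, k3⟩ := key w (Or.inr ⟨q, rfl, hV, by rw [hr, h3], p', hp', Or.inl hw0⟩) h3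
    exact ⟨_, k1, k2, Or.inl (k3.trans hw0)⟩
  · let q' : X.Q := (p', c, W.erase c)
    have hne : q' ≠ q := by
      intro h
      apply h2 c hc
      rw [← h]; simp [q']
    have hw : nts (rep (X.e (.sl c)) [.inl (X.e (.ms q'))] w) = X.conf q' := by
      rw [nts_rep (h1.trans (X.slaves_erase hc)) (by simp)]
      simp [conf, q']
    have hd : X.dec (rep (X.e (.sl c)) [.inl (X.e (.ms q'))] w) = z := by
      rw [X.dec_rep (by rw [dec_e]; rfl), h3]
    obtain ⟨k1, k2, k3⟩ := key _ (Or.inr ⟨q, rfl, hV, by rw [hr, hd], p', hp',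
      Or.inr ⟨q', rfl, hw, hne⟩⟩) hd
    exact ⟨_, k1, k2, Or.inr ⟨q', rfl, by simp [q'], k3.trans hw⟩⟩

theorem dec_split {y u v : SForm ℕ} {A : ℕ} (h : X.dec y = u ++ .inl A :: v) :
    ∃ u' v' a, y = u' ++ .inl a :: v' ∧ X.dec u' = u ∧ X.dec v' = v ∧ X.decS (X.d a) = A := by
  obtain ⟨u', t, rfl, h1, h2⟩ := List.map_eq_append_iff.1 h
  obtain ⟨s, v', rfl, h3, h4⟩ := List.map_eq_cons_iff.1 h2
  cases s with
  | inr s => simp at h3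
  | inl a => exact ⟨u', v', a, rfl, h1, h4, by simpa using h3⟩

def Reach (X : Ctx) (x : SForm ℕ) (p : Fin X.G.nLab) : Prop :=
  ∃ y, Relation.ReflTransGen X.MacB [.inl (X.e .st)] y ∧ X.dec y = x ∧
    (nts y = 0 ∨ ∃ q : X.Q, q.1 = p ∧ q.2.1 ∉ q.2.2 ∧ nts y = X.conf q)

theorem reach_step {x x' : SForm ℕ} {p p' : Fin X.G.nLab} (h : X.Reach x p)
    (hx : ntCount x ≤ X.m) (hs : X.G.PStep (x, p) (x', p')) (hx' : ntCount x' ≤ X.m) :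
    X.Reach x' p' := by
  obtain ⟨y, hy, rfl, h⟩ := h
  rcases hs with ⟨u, v, h1, h2, h3⟩ | ⟨_, _, h3⟩
  swap
  · rw [X.hac] at h3; simp at h3
  dsimp only at h1 h2 h3
  subst h2
  obtain ⟨u, v, a, rfl, rfl, rfl, ha⟩ := dec_split h1
  rw [X.ntCount_dec] at hx
  rcases h with h | ⟨q, rfl, ho, h⟩
  · simp at h
  have hac : a ∈ X.conf q := by rw [← h]; simp
  obtain ⟨s, rfl⟩ := X.conf_e hac
  rw [X.hd] at ha
  rcases X.e_mem_conf.1 hac with rfl | ⟨b, hb, rfl⟩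
  · have hr : X.G.rule q.1 = ((q.2.1.2 : ℕ), (X.G.rule q.1).2) := Prod.ext ha.symm rfl
    rcases q.2.2.eq_empty_or_nonempty with hV | ⟨b, hb⟩
    · obtain ⟨y', k1, k2, k3⟩ := last_step h hV hr h3 hx hx'
      exact ⟨y', hy.tail k1, k2, k3⟩
    · obtain ⟨u', v', q', k1, k2, k3, k4, k5, k6, k7⟩ := pass_step h ho hb hx
      have hc : ntCount (u' ++ .inl (X.e (.sl q.2.1)) :: v') ≤ X.m := by
        rw [← X.ntCount_dec] at hx ⊢
        simpa [k6, k7, ntCount_eq] using hx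
      obtain ⟨y', q'', g1, g2, g3, g4, g5⟩ := slave_step (z := (X.G.rule q.1).2) k5 k3 k4
        (by rw [k2]; exact hr) (by rw [k2]; exact h3) hc
        (by rw [k6, k7]; exact hx')
      exact ⟨y', (hy.tail k1).tail g1, by rw [g5, k6, k7], Or.inr ⟨q'', g2, g3, g4⟩⟩
  · have hr : X.G.rule q.1 = ((b.2 : ℕ), (X.G.rule q.1).2) := Prod.ext ha.symm rfl
    obtain ⟨y', q'', g1, g2, g3, g4, g5⟩ := slave_step h ho hb hr h3 hx hx'
    exact ⟨y', hy.tail g1, g5, Or.inr ⟨q'', g2, g3, g4⟩⟩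

theorem reach_init (X : Ctx) (r : Fin X.G.nLab) : X.Reach [.inl X.G.start] r := by
  have hK : 0 < X.K := by have := X.hK; have := X.hm; omega
  let q : X.Q := (r, (⟨0, hK⟩, ⟨_, X.hs⟩), ∅)
  have hS : X.Single .st [.inl (X.e (.ms q))] := Or.inl ⟨rfl, q, rfl, rfl, rfl⟩
  have hM := MacB.single (X := X) .st _ [.inl (X.e .st)] hS (by simp)
    (by have := X.hm; simpa [ntCount_eq] using this)
    (by have := X.hm; rw [rep_cons_self]; simpa [ntCount_eq, rep] using this)
  rw [rep_cons_self] at hM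
  refine ⟨_, .single hM, ?_, Or.inr ⟨q, rfl, by simp [q], ?_⟩⟩
  · simp [rep, decS, q]
  · simp [rep, conf, slaves, q]

theorem mac_complete (X : Ctx) {w : List ℕ} (h : w ∈ X.G.langB X.m) :
    Relation.ReflTransGen X.MacB [.inl (X.e .st)] (w.map Sum.inr) := by
  obtain ⟨r₁, r₂, h0, h⟩ := h
  have key : ∀ c, Relation.ReflTransGen (fun p q => X.G.PStep p q ∧ ntCount q.1 ≤ X.m)
      ([Sum.inl X.G.start], r₁) c → X.Reach c.1 c.2 ∧ ntCount c.1 ≤ X.m := by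
    intro c hc
    induction hc with
    | refl => exact ⟨X.reach_init r₁, h0⟩
    | tail _ h2 ih => exact ⟨reach_step ih.1 ih.2 h2.1 h2.2, h2.2⟩
  obtain ⟨⟨y, k1, k2, k3⟩, _⟩ := key _ h
  have : nts y = 0 := by
    rw [← Multiset.card_eq_zero, ← ntCount_eq, ← X.ntCount_dec, k2]
    simp [ntCount_eq]
  obtain ⟨w', rfl⟩ := term_of_nts this
  rw [dec_term] at k2
  simp only at k2
  rwa [k2] at k1

end Ctx

namespace Ctx
variable {X : Ctx}

def SC (C : Set (List (Rule ℕ))) (f : Mode) (b : ℕ) (x y : SForm ℕ) : Prop :=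
  ∃ P ∈ C, ∃ n, StepsNB P b n x y ∧ modeOK P f n y

theorem assemble (X : Ctx) (hG : X.G.lang ⊆ X.G.langB X.m) (f : Mode)
    (C : Set (List (Rule ℕ))) (hC : C.Finite)
    (hlam : X.G.LamFree → ∀ P ∈ C, ∀ r ∈ P, r.2 ≠ []) (Inv : SForm ℕ → Prop)
    (hI0 : Inv [.inl (X.e .st)])
    (hIs : ∀ y y' P n, Inv y → P ∈ C → StepsN P n y y' → modeOK P f n y' → Inv y')
    (hIT : ∀ w : List ℕ, Inv (w.map Sum.inr) → w ∈ X.G.lang)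
    (hcomp : ∀ y y', X.MacB y y' → Relation.ReflTransGen (SC C f X.m) y y') :
    ∃ G' : CDGS ℕ, (X.G.LamFree → G'.LamFree) ∧ G'.lang f = X.G.lang ∧
      G'.lang f ⊆ G'.langB f X.m := by
  obtain ⟨G', h1, h2, h3⟩ := exists_cdgs C hC (X.e .st)
  have hsub : G'.lang f ⊆ X.G.lang := by
    intro w hw
    apply hIT
    have key : ∀ y, Relation.TransGen (G'.ModeStep f) [Sum.inl G'.start] y → Inv y := by
      intro y hy
      rw [h1] at hy
      induction hy with
      | single h =>
        obtain ⟨i, n, k1, k2⟩ := h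
        exact hIs _ _ _ n hI0 (h2 i) k1 k2
      | tail _ h ih =>
        obtain ⟨i, n, k1, k2⟩ := h
        exact hIs _ _ _ n ih (h2 i) k1 k2
    exact key _ hw
  have hsup : X.G.lang ⊆ G'.langB f X.m := by
    intro w hw
    have hw := X.mac_complete (hG hw)
    have hw' : Relation.ReflTransGen (G'.ModeStepB f X.m) [.inl (X.e .st)] (w.map Sum.inr) := by
      have : ∀ y, Relation.ReflTransGen X.MacB [.inl (X.e .st)] y →
          Relation.ReflTransGen (G'.ModeStepB f X.m) [.inl (X.e .st)] y := by
        intro y hy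
        induction hy with
        | refl => exact .refl
        | tail _ h ih =>
          refine ih.trans (rtg_lift id ?_ (hcomp _ _ h))
          rintro a b ⟨P, hP, n, k1, k2⟩
          obtain ⟨i, rfl⟩ := h3 P hP
          exact ⟨i, n, k1, k2⟩
      exact this _ hw
    refine ⟨by have := X.hm; simpa [ntCount_eq] using this, ?_⟩
    rw [h1]
    rcases Relation.reflTransGen_iff_eq_or_transGen.1 hw' with h | h
    · have := congrArg nts h; simp at this
    · exact h
  exact ⟨G', fun h i => hlam h _ (h2 i), hsub.antisymm (hsup.trans (cd_langB_sub _ _ _)),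
    hsub.trans hsup⟩

theorem JT.lang {w : List ℕ} (h : X.JT (w.map Sum.inr)) : w ∈ X.G.lang := by
  obtain ⟨_, p, r, h⟩ := h
  rw [dec_term] at h
  exact ⟨r, p, h⟩

theorem chainR_ne {A B n : ℕ} {w : SForm ℕ} (hw : w ≠ []) : ∀ r ∈ chainR A w B n, r.2 ≠ [] := by
  intro r hr
  obtain ⟨i, _, rfl⟩ := mem_chainR.1 hr
  dsimp only
  split_ifs <;> simp [hw]

/-! the =k and ≥k modes -/

def CE (X : Ctx) (k : ℕ) : Set (List (Rule ℕ)) :=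
  {P | ∃ (A : X.S) (w : SForm ℕ), X.Single A w ∧ P = chainR (X.e A) w X.B k} ∪
  {P | ∃ (c : X.Q × X.L × Bool × X.Q) (w : SForm ℕ), X.Pair c.1 c.2.1 c.2.2.1 c.2.2.2 w ∧
    P = chainR (X.e (.ms c.1)) [.inl (X.e (X.aS c.2.2.1 c.1 c.2.2.2))] X.B (k - 1) ++
      [(X.e (.sl c.2.1), w)]}

theorem aS_ne {q : X.Q} {b : X.L} {f : Bool} {q' : X.Q} {w2 : SForm ℕ}
    (h : X.Pair q b f q' w2) : X.aS f q q' ≠ .ms q := by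
  intro h'
  have := h.a_conf
  rw [h'] at this
  exact h.q_conf this

theorem eMode (X : Ctx) (hG : X.G.lang ⊆ X.G.langB X.m) (k : ℕ) (hk : 2 ≤ k) (f : Mode)
    (ho : ∀ (P : List (Rule ℕ)) m y, modeOK P f m y → k ≤ m)
    (hi : ∀ (P : List (Rule ℕ)) y, modeOK P f k y) :
    ∃ G' : CDGS ℕ, (X.G.LamFree → G'.LamFree) ∧ G'.lang f = X.G.lang ∧
      G'.lang f ⊆ G'.langB f X.m := by
  refine X.assemble hG f (X.CE k) ?_ ?_
    (fun y => y = [.inl (X.e .st)] ∨ X.J0 y ∨ X.JT y) (Or.inl rfl) ?_ ?_ ?_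
  · refine Set.Finite.union ?_ ?_
    · exact X.fin_img _ (fun A w h => h.ws) _
    · exact X.fin_img (fun (c : X.Q × X.L × Bool × X.Q) w => X.Pair c.1 c.2.1 c.2.2.1 c.2.2.2 w)
        (fun A w h => h.ws)
        (fun c w => chainR (X.e (.ms c.1)) [.inl (X.e (X.aS c.2.2.1 c.1 c.2.2.2))] X.B (k - 1) ++
      [(X.e (.sl c.2.1), w)])
  · rintro hl P (⟨A, w, h, rfl⟩ | ⟨⟨q, b, f, q'⟩, w, h, rfl⟩) r hr
    · exact chainR_ne (h.ne_nil hl) r hr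
    · rcases List.mem_append.1 hr with hr | hr
      · exact chainR_ne (by simp) r hr
      · simp at hr; subst hr; exact h.nil hl
  · intro y y' P n hy hP hst hmo
    have hkn := ho _ _ _ hmo
    have hlt : ∀ a ∈ nts y, a < X.B := by
      intro a ha
      rcases hy with rfl | ⟨q, h1, _⟩ | ⟨h1, _⟩
      · simp at ha; subst ha; exact X.hB _
      · rw [h1] at ha; exact X.conf_lt ha
      · rw [h1] at ha; simp at ha
    have hnd : (nts y).Nodup := by
      rcases hy with rfl | ⟨q, h1, _⟩ | ⟨h1, _⟩
      · simp
      · rw [h1]; exact X.conf_nodup q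
      · rw [h1]; simp
    rcases hP with ⟨A, w, h, rfl⟩ | ⟨⟨q, b, f, q'⟩, w, h, rfl⟩
    · obtain ⟨h1, rfl⟩ := sComp_sound (by omega) (X.hB _) h.nts hst hlt hkn hnd
      right
      rcases hy with rfl | ⟨q, h2, h3⟩ | ⟨h2, _⟩
      · simp at h1; subst h1; exact Or.inl (L_init h)
      · rw [h2, e_mem_conf] at h1
        have hA : A = .ms q := by
          rcases h1 with h1 | ⟨b, _, rfl⟩
          · exact h1
          · rcases h with ⟨h, _⟩ | ⟨_, h, _⟩ <;> simp at h
        subst hA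
        exact L_single h2 h3 h
      · rw [h2] at h1; simp at h1
    · dsimp only at h hst
      obtain ⟨h1, h1', rfl⟩ := pComp_sound (by omega) (X.hB _) (X.hB _) (X.hB _)
        (by simpa using aS_ne h) (by simpa using h.a_ne_b) (by simp)
        (fun a ha => ⟨(h.w a ha).1, (h.w a ha).2.2.1, (h.w a ha).2.1⟩) hst hlt (by omega) hnd
      right; left
      rcases hy with rfl | ⟨q, h2, h3⟩ | ⟨h2, _⟩
      · simp at h1
      · rw [h2, e_mem_conf] at h1
        simp at h1
        subst h1
        rw [rep3 h2 h]
        exact L3 (L2 (L1 b f q' h2 h3) h)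
      · rw [h2] at h1; simp at h1
  · rintro w (h | ⟨q, h, _⟩ | h)
    · have := congrArg nts h; simp at this
    · simp [conf] at h
    · exact h.lang
  · rintro y y' h
    apply Relation.ReflTransGen.single
    cases h with
    | single A w _ h hy hb hb2 =>
      refine ⟨_, Or.inl ⟨A, w, h, rfl⟩, k, ?_, hi _ _⟩
      obtain ⟨u, v, rfl, _, h3⟩ := rep_split hy (by simp)
      rw [h3] at hb2 ⊢
      exact chain_steps (by omega) (fun r hr => hr) u v hb hb2
    | pair q b f q' w2 _ h hy hb hb2 =>
      refine ⟨_, Or.inr ⟨(q, b, f, q'), w2, h, rfl⟩, k, ?_, hi _ _⟩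
      have hk' : k = k - 1 + 1 := by omega
      rw [hk']
      refine pComp_complete (by omega) hy (by simp) ?_ (h.nts1 hy).2 hb hb2
      rw [X.slaves_erase h.1, Multiset.cons_swap]

/-! modes with t -/

noncomputable def Fl (X : Ctx) (F : X.S → Prop) : List ℕ :=
  (Set.toFinite {s | F s}).toFinset.toList.map X.e

theorem mem_Fl {F : X.S → Prop} {a : ℕ} : a ∈ X.Fl F ↔ ∃ s, F s ∧ X.e s = a := by
  simp [Fl]

def mty : X.S → Prop
  | .sl _ => False
  | _ => True

def F0 (X : Ctx) (w : SForm ℕ) (s : X.S) : Prop := mty s ∧ X.e s ∉ nts w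
abbrev Kp (X : Ctx) := X.Q × X.L × Bool × X.Q
def mkk (c : X.Kp) : X.S := .mt c.1 c.2.1 c.2.2.1 c.2.2.2
def F2 (X : Ctx) (c : X.Kp) (w : SForm ℕ) (s : X.S) : Prop :=
  mty s ∧ s ≠ mkk c ∧ X.e s ∉ nts w

noncomputable def c0 (X : Ctx) (n : ℕ) (A : X.S) (w : SForm ℕ) : List (Rule ℕ) :=
  tComp (X.e A) w X.B n (X.Fl (X.F0 w))
noncomputable def c1 (X : Ctx) (n : ℕ) (c : X.Kp) : List (Rule ℕ) :=
  tComp (X.e (.ms c.1)) [.inl (X.e (mkk c))] X.B n (X.Fl (X.F2 c []))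
noncomputable def c2 (X : Ctx) (n : ℕ) (c : X.Kp) (w : SForm ℕ) : List (Rule ℕ) :=
  tComp (X.e (.sl c.2.1)) w X.B n (X.Fl (X.F2 c w))
noncomputable def c3 (X : Ctx) (n : ℕ) (c : X.Kp) : List (Rule ℕ) :=
  tComp (X.e (mkk c)) [.inl (X.e (X.aS c.2.2.1 c.1 c.2.2.2))] X.B n (X.Fl (fun s => s = .sl c.2.1))

def CT (X : Ctx) (n : ℕ) : Set (List (Rule ℕ)) :=
  ({P | ∃ (A : X.S) (w : SForm ℕ), X.Single A w ∧ P = X.c0 n A w} ∪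
  {P | ∃ (c : X.Kp) (w : SForm ℕ), X.Pair c.1 c.2.1 c.2.2.1 c.2.2.2 w ∧ P = X.c2 n c w}) ∪
  (Set.range (X.c1 n) ∪ {P | ∃ c : X.Kp, c.2.1 ∈ c.1.2.2 ∧ P = X.c3 n c})

theorem CT_fin (X : Ctx) (n : ℕ) : (X.CT n).Finite := by
  refine Set.Finite.union (Set.Finite.union ?_ ?_) (Set.Finite.union (Set.finite_range _) ?_)
  · exact X.fin_img _ (fun A w h => h.ws) _
  · exact X.fin_img (fun (c : X.Kp) w => X.Pair c.1 c.2.1 c.2.2.1 c.2.2.2 w)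
      (fun A w h => h.ws) (X.c2 n)
  · refine (Set.finite_range (X.c3 n)).subset ?_
    rintro P ⟨c, _, rfl⟩
    exact ⟨c, rfl⟩

theorem tComp_ne {A B n : ℕ} {w : SForm ℕ} {F : List ℕ} (hw : w ≠ []) :
    ∀ r ∈ tComp A w B n F, r.2 ≠ [] := by
  intro r hr
  rcases List.mem_append.1 hr with hr | hr
  · exact chainR_ne hw r hr
  · obtain ⟨f, _, rfl⟩ := List.mem_map.1 hr
    simp

theorem CT_lam (X : Ctx) (n : ℕ) (hl : X.G.LamFree) : ∀ P ∈ X.CT n, ∀ r ∈ P, r.2 ≠ [] := by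
  rintro P ((⟨A, w, h, rfl⟩ | ⟨c, w, h, rfl⟩) | (⟨c, rfl⟩ | ⟨c, _, rfl⟩))
  · exact tComp_ne (h.ne_nil hl)
  · exact tComp_ne (h.nil hl)
  · exact tComp_ne (by simp)
  · exact tComp_ne (by simp)

theorem mem_rep {a A : ℕ} {w x : SForm ℕ} (h : a ∈ nts x) (hne : a ≠ A) :
    a ∈ nts (rep A w x) := by
  obtain ⟨u, v, rfl⟩ := List.append_of_mem (mem_nts.1 h)
  rw [rep_append, rep_cons_ne hne]
  simp

def IT (X : Ctx) (y : SForm ℕ) : Prop :=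
  y = [.inl (X.e .st)] ∨ X.J0 y ∨ (∃ c : X.Kp, J1 c.1 c.2.1 c.2.2.1 c.2.2.2 y) ∨
    (∃ c : X.Kp, J2 c.1 c.2.1 c.2.2.1 c.2.2.2 y) ∨ X.JT y

theorem slaves_lt {V : Finset X.L} {a : ℕ} (h : a ∈ X.slaves V) : a < X.B := by
  simp only [slaves, Multiset.mem_map] at h
  obtain ⟨s, _, rfl⟩ := h
  exact X.hB _

theorem IT.lt {y : SForm ℕ} (h : X.IT y) : ∀ a ∈ nts y, a < X.B := by
  intro a ha
  rcases h with rfl | ⟨q, h1, _⟩ | ⟨c, h1, _⟩ | ⟨c, w2, hp, h1, _⟩ | ⟨h1, _⟩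
  · simp at ha; subst ha; exact X.hB _
  · rw [h1] at ha; exact X.conf_lt ha
  · rw [h1, Multiset.mem_cons] at ha
    rcases ha with rfl | ha
    · exact X.hB _
    · exact slaves_lt ha
  · rw [h1, Multiset.mem_cons, Multiset.mem_add] at ha
    rcases ha with rfl | ha | ha
    · exact X.hB _
    · exact (hp.w a ha).1
    · exact slaves_lt ha
  · rw [h1] at ha; simp at ha

theorem IT_sound (X : Ctx) {n k : ℕ} (hn : 1 ≤ n) {y y' : SForm ℕ} {P : List (Rule ℕ)}
    (hy : X.IT y) (hP : P ∈ X.CT n) (hs : StepsN P k y y') (ht : ¬ ∃ z, RStep P y' z) :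
    X.IT y' := by
  have hlt := hy.lt
  rcases hP with (⟨A, w, h, rfl⟩ | ⟨⟨q, b, f, q'⟩, w, h, rfl⟩) |
    (⟨⟨q, b, f, q'⟩, rfl⟩ | ⟨⟨q, b, f, q'⟩, hb, rfl⟩)
  · obtain ⟨rfl, _, hF⟩ := tComp_sound hn (X.hB _) h.nts hs hlt ht
    by_cases hA : X.e A ∈ nts y
    swap
    · rw [rep_of_notMem hA]; exact hy
    rcases hy with rfl | ⟨q, h1, h2⟩ | ⟨c, h1, _⟩ | ⟨c, w2, hp, h1, _⟩ | ⟨h1, _⟩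
    · simp at hA; subst hA; exact Or.inr (Or.inl (L_init h))
    · rw [h1, e_mem_conf] at hA
      have hA' : A = .ms q := by
        rcases hA with h1 | ⟨b, _, rfl⟩
        · exact h1
        · rcases h with ⟨h, _⟩ | ⟨_, h, _⟩ <;> simp at h
      subst hA'
      rcases L_single h1 h2 h with h | h
      · exact Or.inr (Or.inl h)
      · exact Or.inr (Or.inr (Or.inr (Or.inr h)))
    · exfalso
      rw [h1] at hA
      rcases h with ⟨rfl, _⟩ | ⟨_, rfl, _⟩ <;> simp at hA
    · exfalso
      have hne : A ≠ mkk c := by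
        rintro rfl
        rcases h with ⟨h, _⟩ | ⟨_, h, _⟩ <;> simp [mkk] at h
      refine hF (X.e (mkk c)) (mem_Fl.2 ⟨mkk c, ⟨trivial, ?_⟩, rfl⟩)
        (mem_rep (by rw [h1]; simp [mkk]) (by simpa using hne.symm))
      rcases h with ⟨_, q, _, _, rfl⟩ | ⟨q, _, _, _, p, _, h | ⟨q', _, h, _⟩⟩
      · simp [mkk]
      · rw [h]; simp
      · rw [h]; exact mt_conf
    · rw [h1] at hA; simp at hA
  · obtain ⟨rfl, _, hF⟩ := tComp_sound hn (X.hB _)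
      (fun a ha => ⟨(h.w a ha).1, (h.w a ha).2.1⟩) hs hlt ht
    dsimp only at h hF
    by_cases hA : X.e (.sl b) ∈ nts y
    swap
    · rw [rep_of_notMem hA]; exact hy
    have hF' : ∀ s : X.S, X.e s ∈ nts y → mty s → s = mkk (q, b, f, q') ∨ X.e s ∈ nts w := by
      intro s hs hm
      by_contra hcon
      rw [not_or] at hcon
      refine hF (X.e s) (mem_Fl.2 ⟨s, ⟨hm, hcon⟩, rfl⟩) (mem_rep hs ?_)
      intro h'
      rw [e_inj] at h'
      subst h'
      exact hm
    rcases hy with rfl | ⟨q, h1, h2⟩ | ⟨⟨q0, b0, f0, q0'⟩, h1, h2⟩ |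
      ⟨⟨q0, b0, f0, q0'⟩, w2, hp, h1, _⟩ | ⟨h1, _⟩
    · simp at hA
    · exfalso
      rcases hF' (.ms q) (by rw [h1]; simp) trivial with h3 | h3
      · simp [mkk] at h3
      · have := h.conf' h3
        simp at this
        subst this
        rw [h1] at hA
        exact h.b_conf hA
    · right; right; right; left
      rcases hF' (mkk (q0, b0, f0, q0')) (by rw [h1]; simp [mkk]) trivial with h3 | h3
      · simp only [mkk, Sy.mt.injEq] at h3
        obtain ⟨rfl, rfl, rfl, rfl⟩ := h3
        exact ⟨(q0, b0, f0, q0'), L2 ⟨h1, h2⟩ h⟩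
      · exact absurd rfl ((h.w _ h3).2.2.2 _ _ _ _)
    · exfalso
      rcases hF' (mkk (q0, b0, f0, q0')) (by rw [h1]; simp [mkk]) trivial with h3 | h3
      · simp only [mkk, Sy.mt.injEq] at h3
        obtain ⟨rfl, rfl, rfl, rfl⟩ := h3
        rw [h1, Multiset.mem_cons, Multiset.mem_add] at hA
        rcases hA with hA | hA | hA
        · simp at hA
        · exact absurd rfl (hp.w _ hA).2.1
        · simp at hA
      · exact absurd rfl ((h.w _ h3).2.2.2 _ _ _ _)
    · rw [h1] at hA; simp at hA
  · obtain ⟨rfl, _, hF⟩ := tComp_sound hn (X.hB _)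
      (by intro a ha; simp at ha; subst ha; exact ⟨X.hB _, by simp [mkk]⟩) hs hlt ht
    dsimp only at hF
    by_cases hA : X.e (.ms q) ∈ nts y
    swap
    · rw [rep_of_notMem hA]; exact hy
    rcases hy with rfl | ⟨q, h1, h2⟩ | ⟨⟨q0, b0, f0, q0'⟩, h1, h2⟩ |
      ⟨⟨q0, b0, f0, q0'⟩, w2, hp, h1, _⟩ | ⟨h1, _⟩
    · simp at hA
    · right; right; left
      rw [h1] at hA
      simp at hA
      subst hA
      exact ⟨(q, b, f, q'), L1 b f q' h1 h2⟩
    · rw [h1] at hA; simp at hA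
    · exfalso
      by_cases h3 : mkk (q0, b0, f0, q0') = mkk (X := X) (q, b, f, q')
      · simp only [mkk, Sy.mt.injEq] at h3
        obtain ⟨rfl, rfl, rfl, rfl⟩ := h3
        rw [h1, Multiset.mem_cons, Multiset.mem_add] at hA
        rcases hA with hA | hA | hA
        · simp at hA
        · exact absurd rfl (hp.w _ hA).2.2.1
        · simp at hA
      · exact hF (X.e (mkk (q0, b0, f0, q0'))) (mem_Fl.2 ⟨mkk (q0, b0, f0, q0'), ⟨trivial, h3, by simp⟩, rfl⟩)
          (mem_rep (by rw [h1]; simp [mkk]) (by simp [mkk]))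
    · rw [h1] at hA; simp at hA
  · obtain ⟨rfl, _, hF⟩ := tComp_sound hn (X.hB _)
      (by intro a ha; simp at ha; subst ha; exact ⟨X.hB _, by cases f <;> simp [mkk, aS]⟩) hs hlt ht
    dsimp only at hF hb
    by_cases hA : X.e (mkk (q, b, f, q')) ∈ nts y
    swap
    · rw [rep_of_notMem hA]; exact hy
    rcases hy with rfl | ⟨q, h1, h2⟩ | ⟨⟨q0, b0, f0, q0'⟩, h1, h2⟩ |
      ⟨⟨q0, b0, f0, q0'⟩, w2, hp, h1, h2⟩ | ⟨h1, _⟩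
    · simp [mkk] at hA
    · rw [h1] at hA; exact absurd hA mt_conf
    · exfalso
      rw [h1] at hA
      simp [mkk] at hA
      obtain ⟨rfl, rfl, rfl, rfl⟩ := hA
      exact hF (X.e (.sl b)) (mem_Fl.2 ⟨_, rfl, rfl⟩)
        (mem_rep (by rw [h1]; simp [hb]) (by simp [mkk]))
    · right; left
      have hA' : mkk (X := X) (q, b, f, q') = mkk (q0, b0, f0, q0') := by
        rw [h1, Multiset.mem_cons, Multiset.mem_add] at hA
        rcases hA with hA | hA | hA
        · exact X.e_inj.1 hA
        · exact absurd rfl ((hp.w _ hA).2.2.2 _ _ _ _)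
        · simp [mkk] at hA
      simp only [mkk, Sy.mt.injEq] at hA'
      obtain ⟨rfl, rfl, rfl, rfl⟩ := hA'
      exact L3 ⟨w2, hp, h1, h2⟩
    · rw [h1] at hA; simp at hA

theorem tMode (X : Ctx) (hG : X.G.lang ⊆ X.G.langB X.m) (n : ℕ) (hn : 1 ≤ n) (f : Mode)
    (ho : ∀ (P : List (Rule ℕ)) m y, modeOK P f m y → ¬ ∃ z, RStep P y z)
    (hi : ∀ (P : List (Rule ℕ)) y, (¬ ∃ z, RStep P y z) → modeOK P f n y) :
    ∃ G' : CDGS ℕ, (X.G.LamFree → G'.LamFree) ∧ G'.lang f = X.G.lang ∧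
      G'.lang f ⊆ G'.langB f X.m := by
  refine X.assemble hG f (X.CT n) (X.CT_fin n) (X.CT_lam n) X.IT (Or.inl rfl)
    (fun y y' P k h1 h2 h3 h4 => X.IT_sound hn h1 h2 h3 (ho _ _ _ h4)) ?_ ?_
  · rintro w (h | ⟨q, h, _⟩ | ⟨c, h, _⟩ | ⟨c, w2, _, h, _⟩ | h)
    · have := congrArg nts h; simp at this
    · simp [conf] at h
    · simp at h
    · simp at h
    · exact h.lang
  · rintro y y' h
    cases h with
    | single A w _ h hy hb hb2 =>
      apply Relation.ReflTransGen.single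
      refine ⟨_, Or.inl (Or.inl ⟨A, w, h, rfl⟩), n, ?_⟩
      have := tComp_complete (F := X.Fl (X.F0 w)) hn (X.hB _) hy (by simp) h.nts
        (by rw [hy]; intro a ha; simp at ha; subst ha; exact X.hB _) hb hb2 (by
          rintro a ha
          obtain ⟨s, ⟨_, hs⟩, rfl⟩ := mem_Fl.1 ha
          rw [nts_rep hy (by simp)]; simpa using hs)
      exact ⟨this.1, hi _ _ this.2⟩
    | pair q b f' q' w2 _ h hy hb hb2 =>
      have hn1 : nts (rep (X.e (.ms q)) [.inl (X.e (.mt q b f' q'))] y) =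
          X.e (.mt q b f' q') ::ₘ X.slaves q.2.2 := by
        rw [nts_rep hy (by simp)]; simp
      have hn1' : nts (rep (X.e (.ms q)) [.inl (X.e (.mt q b f' q'))] y) =
          X.e (.sl b) ::ₘ (X.e (.mt q b f' q') ::ₘ X.slaves (q.2.2.erase b)) := by
        rw [hn1, X.slaves_erase h.1, Multiset.cons_swap]
      have hn2 : nts (rep (X.e (.sl b)) w2 (rep (X.e (.ms q)) [.inl (X.e (.mt q b f' q'))] y)) =
          X.e (.mt q b f' q') ::ₘ (nts w2 + X.slaves (q.2.2.erase b)) := by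
        rw [nts_rep hn1' (by simp)]; simp
      have hmt : X.e (.mt q b f' q') ∉ nts w2 + X.slaves (q.2.2.erase b) := by
        intro hm
        apply mt_conf (q1 := q') (q := q) (b := b) (f := f') (q' := q')
        rw [← h.2.1]
        exact Multiset.mem_cons_of_mem hm
      have hn3 := h.nts2 hy
      have hb1 : ntCount (rep (X.e (.ms q)) [.inl (X.e (.mt q b f' q'))] y) ≤ X.m := by
        rw [ntCount_eq, hn1]; rw [ntCount_eq, hy] at hb; simpa [conf] using hb
      have hb2' : ntCount (rep (X.e (.sl b)) w2
          (rep (X.e (.ms q)) [.inl (X.e (.mt q b f' q'))] y)) ≤ X.m := by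
        rw [ntCount_eq, hn3, ← h.2.1] at hb2
        rw [ntCount_eq, hn2]; simpa using hb2
      have s1 := tComp_complete (n := n) (B := X.B) (F := X.Fl (X.F2 (q, b, f', q') [])) hn
        (X.hB _) hy (by simp) (w := [.inl (X.e (.mt q b f' q'))])
        (by intro a ha; simp at ha; subst ha; exact ⟨X.hB _, by simp⟩)
        (by rw [hy]; exact fun a ha => X.conf_lt ha) hb hb1 (by
          rintro a ha
          obtain ⟨s, ⟨hs1, hs, _⟩, rfl⟩ := mem_Fl.1 ha
          rw [hn1]
          cases s <;> simp_all [mty, mkk])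
      have s2 := tComp_complete (n := n) (B := X.B) (F := X.Fl (X.F2 (q, b, f', q') w2)) hn
        (X.hB _) hn1' (by simp) (w := w2) (fun a ha => ⟨(h.w a ha).1, (h.w a ha).2.1⟩)
        (by
          rw [hn1]; intro a ha; rw [Multiset.mem_cons] at ha
          rcases ha with rfl | ha
          · exact X.hB _
          · exact slaves_lt ha) hb1 hb2' (by
          rintro a ha
          obtain ⟨s, ⟨hs1, hs, hs2⟩, rfl⟩ := mem_Fl.1 ha
          rw [hn2]
          cases s <;> simp_all [mty, mkk])
      have s3 := tComp_complete (n := n) (B := X.B) (F := X.Fl (fun s => s = .sl b)) hn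
        (X.hB _) hn2 hmt (w := [.inl (X.e (X.aS f' q q'))])
        (by intro a ha; simp at ha; subst ha; exact ⟨X.hB _, by cases f' <;> simp [aS]⟩)
        (by
          rw [hn2]; intro a ha; rw [Multiset.mem_cons, Multiset.mem_add] at ha
          rcases ha with rfl | ha | ha
          · exact X.hB _
          · exact (h.w a ha).1
          · exact slaves_lt ha) hb2' (by rw [← rep3 hy h]; exact hb2) (by
          rintro a ha
          obtain ⟨s, rfl, rfl⟩ := mem_Fl.1 ha
          rw [← rep3 hy h, hn3]
          exact h.b_conf)
      rw [rep3 hy h]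
      have t1 : SC (X.CT n) f X.m y (rep (X.e (.ms q)) [.inl (X.e (.mt q b f' q'))] y) :=
        ⟨_, Or.inr (Or.inl ⟨(q, b, f', q'), rfl⟩), n, s1.1, hi _ _ s1.2⟩
      have t2 : SC (X.CT n) f X.m _ _ :=
        ⟨_, Or.inl (Or.inr ⟨(q, b, f', q'), w2, h, rfl⟩), n, s2.1, hi _ _ s2.2⟩
      have t3 : SC (X.CT n) f X.m _ _ :=
        ⟨_, Or.inr (Or.inr ⟨(q, b, f', q'), h.1, rfl⟩), n, s3.1, hi _ _ s3.2⟩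
      exact ((Relation.ReflTransGen.single t1).tail t2).tail t3

end Ctx

theorem exists_ctx (G : PG ℕ) (hac : G.NoAC) (m : ℕ) (hm : 1 ≤ m) :
    ∃ X : Ctx, X.G = G ∧ X.m = m := by
  obtain ⟨B0, h1, h2⟩ := exists_bound ((List.finRange G.nLab).map G.rule) G.start
  obtain ⟨n, ⟨g⟩⟩ := Finite.exists_equiv_fin (Sy G.nLab (2 * m) B0)
  exact ⟨{
    G := G, m := m, K := 2 * m, B0 := B0, B := n, e := fun s => g s
    d := fun a => if h : a < n then g.symm ⟨a, h⟩ else .st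
    hd := fun s => by simp
    hB := fun s => (g s).2
    hm := hm
    hK := le_rfl
    hs := h1
    hr := fun l => h2 _ (by simp)
    hac := hac }, rfl, rfl⟩

theorem pg_sub_cd (lf : Bool) (f : Mode)
    (h : ∀ X : Ctx, X.G.lang ⊆ X.G.langB X.m → ∃ G' : CDGS ℕ, (X.G.LamFree → G'.LamFree) ∧
      G'.lang f = X.G.lang ∧ G'.lang f ⊆ G'.langB f X.m) :
    PFamFin ℕ lf false ⊆ CDFamFinInf ℕ lf f := by
  rintro L ⟨m, hm, G, h1, h2, h3, h4⟩
  obtain ⟨X, rfl, rfl⟩ := exists_ctx G (h2 rfl) m hm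
  obtain ⟨G', k1, k2, k3⟩ := h X h4
  exact ⟨X.m, hm, G', fun hl => k1 (h1 hl), by rw [k2]; exact h3, k3⟩

/-- For every k ≥ 2, the families L_fin(CD_∞, CF[−λ], t),
L_fin(CD_∞, CF[−λ], =k), L_fin(CD_∞, CF[−λ], ≥k) and, for every k' ∈ ℕ and
Δ ∈ {≤, =, ≥}, L_fin(CD_∞, CF[−λ], (t∧Δk')) all coincide with
L_fin(P, CF[−λ]); with and without erasing rules. -/
theorem stmt15 (lf : Bool) (k : ℕ) (hk : 2 ≤ k) :
    CDFamFinInf ℕ lf Mode.t = PFamFin ℕ lf false ∧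
    CDFamFinInf ℕ lf (Mode.eq k) = PFamFin ℕ lf false ∧
    CDFamFinInf ℕ lf (Mode.ge k) = PFamFin ℕ lf false ∧
    (∀ k' : ℕ, 1 ≤ k' → ∀ d : ℕ → Mode,
      (d = Mode.le ∨ d = Mode.eq ∨ d = Mode.ge) →
      CDFamFinInf ℕ lf (Mode.conj Mode.t (d k')) = PFamFin ℕ lf false) := by
  refine ⟨(cd_sub_pg lf _).antisymm (pg_sub_cd lf _ fun X hG =>
      X.tMode hG 1 le_rfl .t (fun _ _ _ h => h) (fun _ _ h => h)),
    (cd_sub_pg lf _).antisymm (pg_sub_cd lf _ fun X hG =>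
      X.eMode hG k hk (.eq k) (fun _ _ _ h => by simp only [modeOK] at h; omega)
        (fun _ _ => rfl)),
    (cd_sub_pg lf _).antisymm (pg_sub_cd lf _ fun X hG =>
      X.eMode hG k hk (.ge k) (fun _ _ _ h => h) (fun _ _ => le_refl k)), ?_⟩
  rintro k' hk' d (rfl | rfl | rfl)
  · exact (cd_sub_pg lf _).antisymm (pg_sub_cd lf _ fun X hG =>
      X.tMode hG k' hk' _ (fun _ _ _ h => h.1) (fun _ _ h => ⟨h, le_refl k'⟩))
  · exact (cd_sub_pg lf _).antisymm (pg_sub_cd lf _ fun X hG =>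
      X.tMode hG k' hk' _ (fun _ _ _ h => h.1) (fun _ _ h => ⟨h, rfl⟩))
  · exact (cd_sub_pg lf _).antisymm (pg_sub_cd lf _ fun X hG =>
      X.tMode hG k' hk' _ (fun _ _ _ h => h.1) (fun _ _ h => ⟨h, le_refl k'⟩))

end CDHybrid
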